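/- Let k be a field and H an affine quasi-hereditary algebra over k with property (♠) and finite index poset (Π, ≤). Then every tilting module in H-gmod is a finite direct sum of modules of the form q^n T(π) with π ∈ Π and n ∈ Z, where T(π) is the indecomposable tilting module associated to π. -/

import Mathlib

/-!
Every tilting module is a direct sum of modules `q^n T(π)`. All arguments are carried out with
homogeneous `H`-linear maps, and the quotient maps onto the standard modules are handled through
the presentations `P(π) → Δ(π)`, whose kernels are filtered by the `Δ(σ)` with `σ > π`.

*Finiteness.* A standard filtration is automatically finite (`dfilt_finite`): if labels occurred
infinitely often, take one, `π`, maximal with this property. Far down the filtration no larger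
label occurs, so the maps `P(π) → F n` attached to the occurrences of `π` factor through `Δ(π)` and
embed it, which yields an infinite direct sum of nonzero submodules in a Noetherian module.

*Vanishing of `ext¹`.* If `Y` has a proper costandard filtration, possibly infinite, then
`ext¹(Δ(σ), Y) = 0` for all `σ` (`Good`, `good_of_pcfilt`), because the filtration is eventually
zero in each of the finitely many degrees that matter. Hence maps into `Y` extend along inclusions
whose cokernel has a finite standard filtration (`extend_chain`).

*Splitting.* The statement proved by induction on the length of the filtration is more general:
a direct summand `M` of a module `X` with a finite standard filtration is a direct sum of
modules `q^n T(π)` as soon as `M` is `Good` (`dec_of_retract`). Let `e` be the projection of `X`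
onto `M` and `π` a maximal label of the filtration of `X`. Since `P(π)` is local, `X` contains a
copy of `Δ(π)`, with a shorter standard filtration on the quotient, on which `e` is `0` or `1`
(`peel`). If `e` is `0` there, `M` is a summand of the quotient. If `e` is `1` there, then
`Δ(π) ⊆ M`. As `Δ(π)` also embeds into `T(π)` with standardly filtered cokernel, both inclusions
extend, giving `T(π) → M` and `M → T(π)`, up to shifts, that are the identity on `Δ(π)`. Their
composite is a degree-zero endomorphism of the indecomposable `T(π)` fixing a nonzero element, so
it is invertible by Fitting's lemma, valid because graded pieces are finite-dimensional
(`fitting`). Thus `T(π)` splits off `M`, and its complement is a summand of the quotient of `X`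
by `Δ(π)`.
-/

open CategoryTheory

/-! ## Graded algebras (Laurentian) and the category `H`-gmod -/

/-- A `ℤ`-graded `k`-algebra. -/
structure GAlg (k : Type) [Field k] : Type 1 where
  carrier : Type
  [ring : Ring carrier]
  [alg : Algebra k carrier]
  grading : ℤ → Submodule k carrier
  internal : DirectSum.IsInternal grading
  one_mem : (1 : carrier) ∈ grading 0
  mul_mem : ∀ {i j : ℤ} {a b : carrier},
    a ∈ grading i → b ∈ grading j → a * b ∈ grading (i + j)

attribute [instance] GAlg.ring GAlg.alg

variable {k : Type} [Field k]

namespace GAlg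

/-- A graded algebra is Laurentian if the grading is bounded below and has
finite-dimensional components. -/
def Laurentian (A : GAlg k) : Prop :=
  (∃ N : ℤ, ∀ n : ℤ, n < N → A.grading n = ⊥) ∧
    ∀ n : ℤ, FiniteDimensional k (A.grading n)

/-- Property `(♠)`: there is a central `ℤ≥0`-graded subalgebra `Z ⊆ H_{≥0}` with
`Z₀ = k·1` such that `H` is finitely generated as a `Z`-module. -/
def Spade (A : GAlg k) : Prop :=
  ∃ Z : ℤ → Submodule k A.carrier,
    (∀ n, Z n ≤ A.grading n) ∧
    (∀ n : ℤ, n < 0 → Z n = ⊥) ∧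
    (Z 0 = Submodule.span k {(1 : A.carrier)}) ∧
    (∀ (i j : ℤ) (a b : A.carrier), a ∈ Z i → b ∈ Z j → a * b ∈ Z (i + j)) ∧
    (∀ (i : ℤ) (a : A.carrier), a ∈ Z i → ∀ h : A.carrier, a * h = h * a) ∧
    (∃ s : Finset A.carrier,
      AddSubgroup.closure
        {x : A.carrier | ∃ i : ℤ, ∃ z ∈ Z i, ∃ t ∈ s, x = z * t} = ⊤)

end GAlg

/-- A finitely generated graded module over a graded algebra. -/
structure GMod (A : GAlg k) : Type 1 where
  carrier : Type
  [acg : AddCommGroup carrier]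
  [mod : Module A.carrier carrier]
  [kmod : Module k carrier]
  [tower : IsScalarTower k A.carrier carrier]
  [scc : SMulCommClass k A.carrier carrier]
  grading : ℤ → Submodule k carrier
  internal : DirectSum.IsInternal grading
  smul_mem : ∀ {i j : ℤ} {a : A.carrier} {x : carrier},
    a ∈ A.grading i → x ∈ grading j → a • x ∈ grading (i + j)
  fg : Module.Finite A.carrier carrier

attribute [instance] GMod.acg GMod.mod GMod.kmod GMod.tower GMod.scc

variable {A : GAlg k}

/-- The category `H`-gmod : morphisms are degree-preserving `H`-linear maps. -/
instance GMod.instCategory : Category (GMod A) where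
  Hom M N := {f : M.carrier →ₗ[A.carrier] N.carrier //
    ∀ (i : ℤ) (x : M.carrier), x ∈ M.grading i → f x ∈ N.grading i}
  id M := ⟨LinearMap.id, fun _ _ h => h⟩
  comp f g := ⟨g.1.comp f.1, fun i x h => g.2 i _ (f.2 i x h)⟩
  id_comp f := Subtype.ext (LinearMap.ext fun _ => rfl)
  comp_id f := Subtype.ext (LinearMap.ext fun _ => rfl)
  assoc f g h := Subtype.ext (LinearMap.ext fun _ => rfl)

/-- The grading shift `q^n`. -/
def GMod.shift (n : ℤ) (M : GMod A) : GMod A where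
  carrier := M.carrier
  grading := fun i => M.grading (i - n)
  internal := by
    have h := (DirectSum.isInternal_submodule_iff_iSupIndep_and_iSup_eq_top
      M.grading).mp M.internal
    rw [DirectSum.isInternal_submodule_iff_iSupIndep_and_iSup_eq_top]
    refine ⟨h.1.comp (f := fun i : ℤ => i - n)
      (fun a b hab => by simp only [] at hab; omega), ?_⟩
    refine le_antisymm le_top ?_
    rw [← h.2]
    refine iSup_le fun i => ?_
    have hg : M.grading i = M.grading ((i + n) - n) := by norm_num
    rw [hg]
    exact le_iSup (fun j : ℤ => M.grading (j - n)) (i + n)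
  smul_mem := fun {i j a x} ha hx => by
    have h := M.smul_mem ha hx
    have : i + (j - n) = (i + j) - n := by ring
    simpa [this] using h
  fg := M.fg

/-- The grading shift as a (graded) functor. -/
def shiftF (A : GAlg k) (n : ℤ) : GMod A ⥤ GMod A where
  obj M := GMod.shift n M
  map f := ⟨f.1, fun i x h => f.2 (i - n) x h⟩

/-- Isomorphism in `H`-gmod, concretely. -/
structure GIso (M N : GMod A) where
  e : M.carrier ≃ₗ[A.carrier] N.carrier
  mem : ∀ (i : ℤ) (x : M.carrier), x ∈ M.grading i → e x ∈ N.grading i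
  mem' : ∀ (i : ℤ) (y : N.carrier), y ∈ N.grading i → e.symm y ∈ M.grading i

/-- A graded (homogeneous) submodule. -/
def GMod.IsGSub (M : GMod A) (W : Submodule A.carrier M.carrier) : Prop :=
  W.restrictScalars k = ⨆ i : ℤ, (W.restrictScalars k ⊓ M.grading i)

/-- The subquotient `W/W'` of a graded module. -/
abbrev sqMod (M : GMod A) (W W' : Submodule A.carrier M.carrier) : Type :=
  W ⧸ (W'.comap W.subtype)

/-- The induced grading on a subquotient. -/
abbrev sqGrading (M : GMod A) (W W' : Submodule A.carrier M.carrier) (i : ℤ) :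
    Submodule k (sqMod M W W') :=
  ((M.grading i).comap ((W.subtype).restrictScalars k)).map
    (((W'.comap W.subtype).mkQ).restrictScalars k)

/-- The subquotient `W/W'` is isomorphic, as a graded module, to `N`. -/
def SQIso (M : GMod A) (W W' : Submodule A.carrier M.carrier) (N : GMod A) : Prop :=
  ∃ e : (sqMod M W W') ≃ₗ[A.carrier] N.carrier,
    ∀ i : ℤ, (sqGrading M W W' i).map
      ((e : sqMod M W W' →ₗ[A.carrier] N.carrier).restrictScalars k) = N.grading i

/-- A separated filtration by graded submodules. -/
structure GFilt (M : GMod A) where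
  F : ℕ → Submodule A.carrier M.carrier
  first : F 0 = ⊤
  anti : ∀ n, F (n + 1) ≤ F n
  graded : ∀ n, M.IsGSub (F n)
  separated : ∀ x : M.carrier, (∀ n, x ∈ F n) → x = 0

/-- The filtration `Φ` has all subquotients zero or of the form `q^d N` with
`N` in the family `S`. -/
def FiltBy (M : GMod A) (Φ : GFilt M) (S : Set (GMod A)) : Prop :=
  ∀ n : ℕ, Subsingleton (sqMod M (Φ.F n) (Φ.F (n + 1))) ∨
    ∃ N ∈ S, ∃ d : ℤ, SQIso M (Φ.F n) (Φ.F (n + 1)) (GMod.shift d N)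

/-- Homogeneous (degree `d`) `H`-linear maps. -/
def ghomSet (M N : GMod A) (d : ℤ) : Set (M.carrier →ₗ[A.carrier] N.carrier) :=
  {f | ∀ (i : ℤ) (x : M.carrier), x ∈ M.grading i → f x ∈ N.grading (i + d)}

/-- Homogeneous degree `d` maps as a `k`-submodule of all `H`-linear maps. -/
def ghomSub (M N : GMod A) (d : ℤ) :
    Submodule k (M.carrier →ₗ[A.carrier] N.carrier) where
  carrier := ghomSet M N d
  add_mem' := fun hf hg i x hx => (N.grading (i + d)).add_mem (hf i x hx) (hg i x hx)
  zero_mem' := fun i x _ => (N.grading (i + d)).zero_mem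
  smul_mem' := fun c f hf i x hx => by
    simpa using (N.grading (i + d)).smul_mem c (hf i x hx)

/-- A graded-simple module. -/
def IsGSimple (M : GMod A) : Prop :=
  Nontrivial M.carrier ∧
    ∀ W : Submodule A.carrier M.carrier, M.IsGSub W → W = ⊥ ∨ W = ⊤

/-- Graded projectivity. -/
def GProjective (P : GMod A) : Prop :=
  ∀ (M N : GMod A) (g : M ⟶ N) (h : P ⟶ N),
    Function.Surjective g.1 → ∃ l : P ⟶ M, l ≫ g = h

/-- Vanishing of all (graded) `ext¹` groups `ext¹(U, V) = ⊕ₙ Ext¹(qⁿU, V) = 0`: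
every extension of a shift of `U` by `V` splits. -/
def Ext1Vanish (U V : GMod A) : Prop :=
  ∀ (n : ℤ) (E : GMod A) (f : V ⟶ E) (g : E ⟶ GMod.shift n U),
    Function.Injective f.1 → Function.Surjective g.1 →
    LinearMap.range f.1 = LinearMap.ker g.1 →
    ∃ s : GMod.shift n U ⟶ E, s ≫ g = 𝟙 (GMod.shift n U)

/-- The structure of an affine highest weight category on `H`-gmod, i.e. an
affine quasi-hereditary structure on `H` (Kleshchev).  The proper costandard
objects are axiomatised through their homological characterisation. -/
structure AHW (A : GAlg k) (Idx : Type) [Fintype Idx] [PartialOrder Idx] :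
    Type 1 where
  /-- simple objects -/
  L : Idx → GMod A
  /-- projective covers -/
  P : Idx → GMod A
  /-- standard objects -/
  Δ : Idx → GMod A
  /-- proper costandard objects -/
  pco : Idx → GMod A
  noeth : IsNoetherianRing A.carrier
  laur : A.Laurentian
  simple : ∀ π, IsGSimple (L π)
  simple_complete : ∀ S : GMod A, IsGSimple S →
    ∃ (π : Idx) (d : ℤ), Nonempty (GIso S (GMod.shift d (L π)))
  simple_irred : ∀ (π σ : Idx) (d : ℤ),
    Nonempty (GIso (L π) (GMod.shift d (L σ))) → π = σ
  proj : ∀ π, GProjective (P π)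
  cover : ∀ π, ∃ p : P π ⟶ L π, Function.Surjective p.1 ∧
    ∀ W : Submodule A.carrier (P π).carrier, (P π).IsGSub W →
      W ⊔ LinearMap.ker p.1 = ⊤ → W = ⊤
  /-- `Δ(π) = P(π)/(Σ images of graded maps from P(σ), σ ≰ π)` -/
  std_def : ∀ π, ∃ dm : P π ⟶ Δ π, Function.Surjective dm.1 ∧
    LinearMap.ker dm.1 =
      ⨆ (p : Σ σ : Idx, (P σ).carrier →ₗ[A.carrier] (P π).carrier)
        (_ : ¬ p.1 ≤ π) (_ : ∃ d, p.2 ∈ ghomSet (P p.1) (P π) d),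
          LinearMap.range p.2
  /-- the kernel of `P(π) ↠ Δ(π)` is filtered by shifts of `Δ(σ)`, `σ > π` -/
  ker_filt : ∀ π, ∃ Φ : GFilt (P π), (∃ N, Φ.F N = ⊥) ∧
    SQIso (P π) (Φ.F 0) (Φ.F 1) (Δ π) ∧
    ∀ n : ℕ, 1 ≤ n →
      (Subsingleton (sqMod (P π) (Φ.F n) (Φ.F (n + 1))) ∨
        ∃ σ : Idx, π < σ ∧ ∃ d : ℤ,
          SQIso (P π) (Φ.F n) (Φ.F (n + 1)) (GMod.shift d (Δ σ)))
  /-- `B_π = end(Δ(π))` is a graded polynomial ring on homogeneous generators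
  of positive degree -/
  end_poly : ∀ π, ∃ (nv : ℕ) (dg : Fin nv → ℤ),
    (∀ i, 0 < dg i) ∧
    ∃ e : MvPolynomial (Fin nv) k →ₐ[k] Module.End A.carrier (Δ π).carrier,
      Function.Bijective e ∧
      ∀ i, (e (MvPolynomial.X i) :
        (Δ π).carrier →ₗ[A.carrier] (Δ π).carrier) ∈ ghomSet (Δ π) (Δ π) (dg i)
  /-- `hom(P(π), Δ(σ))` is a graded free `B_σ`-module of finite rank -/
  hom_free : ∀ π σ, ∃ (mr : ℕ)
    (b : Fin mr → ((P π).carrier →ₗ[A.carrier] (Δ σ).carrier))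
    (db : Fin mr → ℤ),
    (∀ i, b i ∈ ghomSet (P π) (Δ σ) (db i)) ∧
    Function.Bijective (fun c : Fin mr → Module.End A.carrier (Δ σ).carrier =>
      ∑ i, LinearMap.comp (c i : (Δ σ).carrier →ₗ[A.carrier] (Δ σ).carrier) (b i))
  /-- the proper costandard objects have finite length … -/
  pco_finlen : ∀ π, IsFiniteLength A.carrier (pco π).carrier
  /-- … and satisfy `hom(Δ(σ), ∇̄(π)) = δ_{σπ} k` concentrated in degree 0 … -/
  pco_hom : ∀ π, ∃ f₀ : (Δ π).carrier →ₗ[A.carrier] (pco π).carrier,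
    f₀ ∈ ghomSet (Δ π) (pco π) 0 ∧ f₀ ≠ 0 ∧
    (∀ (d : ℤ) (f : (Δ π).carrier →ₗ[A.carrier] (pco π).carrier),
      f ∈ ghomSet (Δ π) (pco π) d → ∃ c : k, f = c • f₀) ∧
    ∀ (σ : Idx) (d : ℤ) (f : (Δ σ).carrier →ₗ[A.carrier] (pco π).carrier),
      f ∈ ghomSet (Δ σ) (pco π) d → σ ≠ π → f = 0
  /-- … and `ext¹(Δ(σ), ∇̄(π)) = 0` -/
  pco_ext : ∀ π σ, Ext1Vanish (Δ σ) (pco π)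

variable {Idx : Type} [Fintype Idx] [PartialOrder Idx]

/-- `V` has a `Δ`-filtration. -/
def HasDFilt (S : AHW A Idx) (M : GMod A) : Prop :=
  ∃ Φ : GFilt M, FiltBy M Φ (Set.range S.Δ)

/-- `V` has a `∇̄`-filtration. -/
def HasPCFilt (S : AHW A Idx) (M : GMod A) : Prop :=
  ∃ Φ : GFilt M, FiltBy M Φ (Set.range S.pco)

/-- Tilting modules. -/
def IsTilting (S : AHW A Idx) (M : GMod A) : Prop :=
  HasDFilt S M ∧ HasPCFilt S M

/-- The multiplicity `(V : Δ(π))` of `Δ(π)` in a given `Δ`-filtration. -/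
noncomputable def dMult (S : AHW A Idx) {M : GMod A} (Φ : GFilt M) (π : Idx) : ℕ :=
  Set.ncard {n : ℕ | ∃ d : ℤ,
    SQIso M (Φ.F n) (Φ.F (n + 1)) (GMod.shift d (S.Δ π))}

/-- `V` admits a (finite) `Δ`-filtration with `(V:Δ(π)) = 1` and `(V:Δ(σ)) = 0`
for `σ ≰ π`. -/
def MultCond (S : AHW A Idx) (M : GMod A) (π : Idx) : Prop :=
  ∃ Φ : GFilt M, FiltBy M Φ (Set.range S.Δ) ∧ (∃ N, Φ.F N = ⊥) ∧
    dMult S Φ π = 1 ∧ ∀ σ : Idx, ¬ σ ≤ π → dMult S Φ σ = 0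

/-- Indecomposability (no nontrivial graded idempotent endomorphism). -/
def Indec (M : GMod A) : Prop :=
  Nontrivial M.carrier ∧
    ∀ e : M ⟶ M, e ≫ e = e → e.1 = 0 ∨ e.1 = LinearMap.id

/-- A short exact sequence in `H`-gmod. -/
def SES {X Y Z : GMod A} (f : X ⟶ Y) (g : Y ⟶ Z) : Prop :=
  Function.Injective f.1 ∧ Function.Surjective g.1 ∧
    LinearMap.range f.1 = LinearMap.ker g.1


namespace GT

/-! ### Homogeneous components and graded submodules -/

/-- The projection of a graded module onto its component of degree `i`. -/
noncomputable def cmp (M : GMod A) (i : ℤ) : M.carrier →ₗ[k] M.carrier :=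
  (M.grading i).subtype ∘ₗ DirectSum.component k ℤ _ i ∘ₗ
    (LinearEquiv.ofBijective (DirectSum.coeLinearMap M.grading) M.internal).symm.toLinearMap

theorem cmp_mem (M : GMod A) (i : ℤ) (x : M.carrier) : cmp M i x ∈ M.grading i := by
  simp [cmp]

theorem symm_of_mem (M : GMod A) {i : ℤ} {x : M.carrier} (hx : x ∈ M.grading i) :
    (LinearEquiv.ofBijective (DirectSum.coeLinearMap M.grading) M.internal).symm x =
      DirectSum.lof k ℤ (fun i => M.grading i) i ⟨x, hx⟩ := by
  rw [LinearEquiv.symm_apply_eq]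
  exact (DirectSum.coeLinearMap_lof M.grading i ⟨x, hx⟩).symm

theorem cmp_of_mem (M : GMod A) {i : ℤ} {x : M.carrier} (hx : x ∈ M.grading i) :
    cmp M i x = x := by
  simp [cmp, symm_of_mem M hx]

theorem cmp_ne (M : GMod A) {i j : ℤ} {x : M.carrier} (hx : x ∈ M.grading j) (h : j ≠ i) :
    cmp M i x = 0 := by
  simp [cmp, symm_of_mem M hx, DirectSum.component.of, h]

theorem iSup_top (M : GMod A) : ⨆ i, M.grading i = ⊤ := M.internal.submodule_iSup_eq_top

theorem mem_of_cmp (M : GMod A) (W : Submodule k M.carrier) {x : M.carrier}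
    (h : ∀ i, cmp M i x ∈ W) : x ∈ W := by
  have hx : x ∈ ⨆ i, M.grading i := by rw [iSup_top]; trivial
  obtain ⟨f, hf⟩ := (Submodule.mem_iSup_iff_exists_finsupp _ _).1 hx
  obtain ⟨hf, rfl⟩ := hf
  refine W.sum_mem fun i _ => ?_
  have : cmp M i (f.sum fun _ xi => xi) = f i := by
    rw [Finsupp.sum, map_sum, Finset.sum_eq_single i]
    · exact cmp_of_mem M (hf i)
    · intro j _ hj
      exact cmp_ne M (hf j) hj
    · intro hi
      simp [Finsupp.notMem_support_iff.1 hi]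
  simpa [this] using h i

theorem eq_zero_of_cmp (M : GMod A) {x : M.carrier} (h : ∀ i, cmp M i x = 0) : x = 0 := by
  simpa using mem_of_cmp M ⊥ (x := x) (by simpa using h)

/-- A family of subspaces spanning the whole space and separated by linear projections is an
internal direct sum decomposition. -/
theorem internal_of_proj {V : Type} [AddCommGroup V] [Module k V] (G : ℤ → Submodule k V)
    (c : ℤ → V →ₗ[k] V) (h1 : ∀ i, ∀ x ∈ G i, c i x = x)
    (h2 : ∀ i j, ∀ x ∈ G j, j ≠ i → c i x = 0) (h3 : ⨆ i, G i = ⊤) :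
    DirectSum.IsInternal G := by
  rw [DirectSum.isInternal_submodule_iff_iSupIndep_and_iSup_eq_top]
  refine ⟨fun i => ?_, h3⟩
  rw [Submodule.disjoint_def]
  intro x hx hx'
  rw [← h1 i x hx]
  have : (⨆ j, ⨆ (_ : j ≠ i), G j) ≤ LinearMap.ker (c i) :=
    iSup₂_le fun j hj y hy => h2 i j y hy hj
  exact this hx'

theorem gsub_iff {M : GMod A} {W : Submodule A.carrier M.carrier} :
    M.IsGSub W ↔ ∀ x ∈ W, ∀ i, cmp M i x ∈ W := by
  constructor
  · intro h x hx i
    have hx' : x ∈ W.restrictScalars k := hx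
    rw [GMod.IsGSub] at h
    rw [h] at hx'
    refine Submodule.iSup_induction _ (motive := fun x => cmp M i x ∈ W) hx' ?_ (by simp) ?_
    · intro j y hy
      by_cases hj : j = i
      · subst hj
        rw [cmp_of_mem M hy.2]; exact hy.1
      · rw [cmp_ne M hy.2 hj]; exact W.zero_mem
    · intro y z hy hz
      rw [map_add]; exact W.add_mem hy hz
  · intro h
    refine le_antisymm (fun x hx => ?_) (iSup_le fun i => inf_le_left)
    exact mem_of_cmp M _ fun i =>
      Submodule.mem_iSup_of_mem i ⟨h x hx i, cmp_mem M i x⟩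

/-- Homogeneous maps commute with taking components. -/
theorem cmp_map {M N : GMod A} {d : ℤ} {f : M.carrier →ₗ[A.carrier] N.carrier}
    (hf : f ∈ ghomSet M N d) (x : M.carrier) (i : ℤ) :
    cmp N (i + d) (f x) = f (cmp M i x) := by
  have : x ∈ LinearMap.ker (cmp N (i + d) ∘ₗ f.restrictScalars k -
      f.restrictScalars k ∘ₗ cmp M i) := by
    refine mem_of_cmp M _ fun j => ?_
    have hj := cmp_mem M j x
    set y := cmp M j x
    rw [LinearMap.mem_ker]
    simp only [LinearMap.sub_apply, LinearMap.comp_apply, LinearMap.coe_restrictScalars]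
    by_cases hji : j = i
    · subst hji
      rw [cmp_of_mem M hj, cmp_of_mem N (hf _ _ hj), sub_self]
    · rw [cmp_ne M hj hji, cmp_ne N (hf _ _ hj) (by omega), map_zero, sub_self]
  rw [LinearMap.mem_ker] at this
  simpa [sub_eq_zero] using this

theorem cmp_map' {M N : GMod A} {d : ℤ} {f : M.carrier →ₗ[A.carrier] N.carrier}
    (hf : f ∈ ghomSet M N d) (x : M.carrier) (i : ℤ) :
    cmp N i (f x) = f (cmp M (i - d) x) := by
  rw [← cmp_map hf, sub_add_cancel]

theorem gsub_top (M : GMod A) : M.IsGSub ⊤ := gsub_iff.2 fun _ _ _ => trivial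

theorem gsub_bot (M : GMod A) : M.IsGSub ⊥ := gsub_iff.2 fun x hx i => by
  rw [Submodule.mem_bot] at hx ⊢; rw [hx, map_zero]

theorem gsub_sup {M : GMod A} {W W' : Submodule A.carrier M.carrier} (h : M.IsGSub W)
    (h' : M.IsGSub W') : M.IsGSub (W ⊔ W') := by
  rw [gsub_iff] at *
  intro x hx i
  obtain ⟨y, hy, z, hz, rfl⟩ := Submodule.mem_sup.1 hx
  rw [map_add]
  exact Submodule.add_mem_sup (h y hy i) (h' z hz i)

theorem gsub_map {M N : GMod A} {d : ℤ} {f : M.carrier →ₗ[A.carrier] N.carrier}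
    (hf : f ∈ ghomSet M N d) {W : Submodule A.carrier M.carrier} (h : M.IsGSub W) :
    N.IsGSub (W.map f) := by
  rw [gsub_iff] at *
  rintro _ ⟨x, hx, rfl⟩ i
  rw [cmp_map' hf]
  exact ⟨_, h x hx _, rfl⟩

theorem gsub_comap {M N : GMod A} {d : ℤ} {f : M.carrier →ₗ[A.carrier] N.carrier}
    (hf : f ∈ ghomSet M N d) {W : Submodule A.carrier N.carrier} (h : N.IsGSub W) :
    M.IsGSub (W.comap f) := by
  rw [gsub_iff] at *
  intro x hx i
  rw [Submodule.mem_comap, ← cmp_map hf]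
  exact h _ hx _

theorem gsub_range {M N : GMod A} {d : ℤ} {f : M.carrier →ₗ[A.carrier] N.carrier}
    (hf : f ∈ ghomSet M N d) : N.IsGSub (LinearMap.range f) := by
  rw [← Submodule.map_top]; exact gsub_map hf (gsub_top M)

theorem gsub_ker {M N : GMod A} {d : ℤ} {f : M.carrier →ₗ[A.carrier] N.carrier}
    (hf : f ∈ ghomSet M N d) : M.IsGSub (LinearMap.ker f) := gsub_comap hf (gsub_bot N)

/-- Along a homogeneous map, a homogeneous element in the image of a graded submodule has a
homogeneous preimage in that submodule. -/
theorem exists_hom_preimage {M N : GMod A} {d : ℤ} {f : M.carrier →ₗ[A.carrier] N.carrier}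
    (hf : f ∈ ghomSet M N d) {W : Submodule A.carrier M.carrier} (h : M.IsGSub W) {i : ℤ}
    {y : N.carrier} (hy : y ∈ N.grading i) (hyW : y ∈ W.map f) :
    ∃ x ∈ W, x ∈ M.grading (i - d) ∧ f x = y := by
  obtain ⟨x, hx, rfl⟩ := hyW
  refine ⟨cmp M (i - d) x, gsub_iff.1 h x hx _, cmp_mem _ _ _, ?_⟩
  rw [← cmp_map' hf, cmp_of_mem N hy]

theorem ghom_comp {M N Q : GMod A} {d d' : ℤ} {f : M.carrier →ₗ[A.carrier] N.carrier}
    {g : N.carrier →ₗ[A.carrier] Q.carrier} (hf : f ∈ ghomSet M N d) (hg : g ∈ ghomSet N Q d') :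
    g ∘ₗ f ∈ ghomSet M Q (d + d') := fun i x hx => by
  rw [← add_assoc]; exact hg _ _ (hf _ _ hx)

theorem ghom_add {M N : GMod A} {d : ℤ} {f g : M.carrier →ₗ[A.carrier] N.carrier}
    (hf : f ∈ ghomSet M N d) (hg : g ∈ ghomSet M N d) : f + g ∈ ghomSet M N d :=
  (ghomSub M N d).add_mem hf hg

theorem ghom_sub {M N : GMod A} {d : ℤ} {f g : M.carrier →ₗ[A.carrier] N.carrier}
    (hf : f ∈ ghomSet M N d) (hg : g ∈ ghomSet M N d) : f - g ∈ ghomSet M N d :=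
  (ghomSub M N d).sub_mem hf hg

theorem ghom_id (M : GMod A) : LinearMap.id ∈ ghomSet M M 0 := fun i x hx => by
  simpa using hx

theorem ghom_zero (M N : GMod A) (d : ℤ) : 0 ∈ ghomSet M N d := (ghomSub M N d).zero_mem

/-- A linear map that kills the kernel of a surjection factors through it. -/
theorem exists_factor {R V W U : Type} [Ring R] [AddCommGroup V] [AddCommGroup W]
    [AddCommGroup U] [Module R V] [Module R W] [Module R U] (g : V →ₗ[R] W) (h : V →ₗ[R] U)
    (hg : Function.Surjective g) (hk : ∀ x, g x = 0 → h x = 0) :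
    ∃ h' : W →ₗ[R] U, ∀ x, h' (g x) = h x := by
  refine ⟨(LinearMap.ker g).liftQ h (fun x hx => hk x hx) ∘ₗ
    (g.quotKerEquivOfSurjective hg).symm.toLinearMap, fun x => ?_⟩
  have : (g.quotKerEquivOfSurjective hg).symm (g x) = (LinearMap.ker g).mkQ x := by
    rw [LinearEquiv.symm_apply_eq]; rfl
  rw [LinearMap.comp_apply, LinearEquiv.coe_coe, this]
  rfl

/-! ### Sub-objects, quotients and sums in the category of graded modules -/

variable (S : AHW A Idx)

theorem noeth (S : AHW A Idx) (M : GMod A) : IsNoetherian A.carrier M.carrier :=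
  haveI := S.noeth
  haveI := M.fg
  isNoetherian_of_isNoetherianRing_of_finite _ _

/-- A graded submodule as an object of `H`-gmod. -/
noncomputable def sb (S : AHW A Idx) (M : GMod A) (W : Submodule A.carrier M.carrier)
    (hW : M.IsGSub W) : GMod A where
  carrier := W
  grading i := (M.grading i).comap (W.subtype.restrictScalars k)
  internal := by
    have hc : ∀ i, ∀ x ∈ W.restrictScalars k, cmp M i x ∈ W.restrictScalars k :=
      fun i x hx => gsub_iff.1 hW x hx i
    refine internal_of_proj _ (fun i => (cmp M i).restrict (hc i)) ?_ ?_ ?_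
    · intro i x hx
      exact Subtype.ext (cmp_of_mem M hx)
    · intro i j x hx hj
      exact Subtype.ext (cmp_ne M hx hj)
    · rw [eq_top_iff]
      rintro ⟨x, hx⟩ -
      have hx' : x ∈ W.restrictScalars k := hx
      rw [GMod.IsGSub] at hW
      rw [hW] at hx'
      have : ∀ y ∈ ⨆ i, (W.restrictScalars k ⊓ M.grading i), ∃ h : y ∈ W,
          (⟨y, h⟩ : W) ∈ ⨆ i, (M.grading i).comap (W.subtype.restrictScalars k) := by
        intro y hy
        refine Submodule.iSup_induction _ (motive := fun y => ∃ h : y ∈ W,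
          (⟨y, h⟩ : W) ∈ ⨆ i, (M.grading i).comap (W.subtype.restrictScalars k)) hy ?_ ?_ ?_
        · intro i z hz
          exact ⟨hz.1, Submodule.mem_iSup_of_mem i hz.2⟩
        · exact ⟨W.zero_mem, Submodule.zero_mem _⟩
        · rintro y z ⟨h1, h2⟩ ⟨h3, h4⟩
          exact ⟨W.add_mem h1 h3, Submodule.add_mem _ h2 h4⟩
      exact (this x hx').2
  smul_mem := fun ha hx => M.smul_mem ha hx
  fg := by
    have := noeth S M
    infer_instance

/-- The quotient by a graded submodule as an object of `H`-gmod. -/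
noncomputable def qt (M : GMod A) (W : Submodule A.carrier M.carrier) (hW : M.IsGSub W) :
    GMod A where
  carrier := M.carrier ⧸ W
  grading i := (M.grading i).map (W.mkQ.restrictScalars k)
  internal := by
    have hex : ∀ i, ∃ c : (M.carrier ⧸ W) →ₗ[k] (M.carrier ⧸ W), ∀ x,
        c (W.mkQ x) = W.mkQ (cmp M i x) := by
      intro i
      refine exists_factor (W.mkQ.restrictScalars k) (W.mkQ.restrictScalars k ∘ₗ cmp M i)
        W.mkQ_surjective ?_
      intro x hx
      have hx' : x ∈ W := by simpa using hx
      simpa using gsub_iff.1 hW x hx' i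
    choose c hc using hex
    refine internal_of_proj _ c ?_ ?_ ?_
    · rintro i _ ⟨x, hx, rfl⟩
      simp only [LinearMap.coe_restrictScalars]
      rw [hc, cmp_of_mem M hx]
    · rintro i j _ ⟨x, hx, rfl⟩ hj
      simp only [LinearMap.coe_restrictScalars]
      rw [hc, cmp_ne M hx hj, map_zero]
    · rw [← Submodule.map_iSup, iSup_top, Submodule.map_top, LinearMap.range_eq_top]
      exact W.mkQ_surjective
  smul_mem := by
    rintro i j a _ ha ⟨x, hx, rfl⟩
    exact ⟨a • x, M.smul_mem ha hx, by simp⟩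
  fg := by
    have := M.fg
    infer_instance

/-- The direct sum of two graded modules. -/
noncomputable def pr (M N : GMod A) : GMod A where
  carrier := M.carrier × N.carrier
  grading i := (M.grading i).prod (N.grading i)
  internal := by
    refine internal_of_proj _ (fun i => (cmp M i).prodMap (cmp N i)) ?_ ?_ ?_
    · rintro i ⟨x, y⟩ ⟨hx, hy⟩
      exact Prod.ext (cmp_of_mem M hx) (cmp_of_mem N hy)
    · rintro i j ⟨x, y⟩ ⟨hx, hy⟩ h
      exact Prod.ext (cmp_ne M hx h) (cmp_ne N hy h)
    · rw [eq_top_iff]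
      rintro ⟨x, y⟩ -
      have h1 : x ∈ (⨆ i, (M.grading i).prod (N.grading i)).comap
          (LinearMap.inl k M.carrier N.carrier) :=
        mem_of_cmp M _ fun i => Submodule.mem_iSup_of_mem i
          ⟨cmp_mem M i x, (N.grading i).zero_mem⟩
      have h2 : y ∈ (⨆ i, (M.grading i).prod (N.grading i)).comap
          (LinearMap.inr k M.carrier N.carrier) :=
        mem_of_cmp N _ fun i => Submodule.mem_iSup_of_mem i
          ⟨(M.grading i).zero_mem, cmp_mem N i y⟩
      have := Submodule.add_mem _ (Submodule.mem_comap.1 h1) (Submodule.mem_comap.1 h2)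
      simpa using this
  smul_mem := fun ha hx => ⟨M.smul_mem ha hx.1, N.smul_mem ha hx.2⟩
  fg := by
    have := M.fg
    have := N.fg
    infer_instance

theorem mkQ_ghom (M : GMod A) (W : Submodule A.carrier M.carrier) (hW : M.IsGSub W) :
    (W.mkQ : M.carrier →ₗ[A.carrier] (qt M W hW).carrier) ∈ ghomSet M (qt M W hW) 0 :=
  fun i x hx => by
    rw [add_zero]; exact ⟨x, hx, rfl⟩

/-- A homogeneous map killing a graded submodule induces a homogeneous map on the quotient. -/
theorem exists_desc (M N : GMod A) (W : Submodule A.carrier M.carrier) (hW : M.IsGSub W)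
    {d : ℤ} {f : M.carrier →ₗ[A.carrier] N.carrier} (hf : f ∈ ghomSet M N d)
    (hk : ∀ x ∈ W, f x = 0) :
    ∃ f' : (qt M W hW).carrier →ₗ[A.carrier] N.carrier, f' ∈ ghomSet (qt M W hW) N d ∧
      ∀ x : M.carrier, f' (W.mkQ x) = f x := by
  refine ⟨W.liftQ f hk, ?_, fun x => rfl⟩
  rintro i _ ⟨x, hx, rfl⟩
  exact hf i x hx


/-! ### Standard modules: projective covers, homomorphisms and filtration steps -/

/-- A graded projective lifts through a homogeneous surjection out of a graded submodule. -/
theorem exists_lift (S : AHW A Idx) {P X Y : GMod A} (hP : GProjective P)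
    {W : Submodule A.carrier X.carrier} (hW : X.IsGSub W) {a b : ℤ} (g : W →ₗ[A.carrier] Y.carrier)
    (hg : ∀ i (x : W), x.1 ∈ X.grading i → g x ∈ Y.grading (i + a))
    (hs : Function.Surjective g) {h : P.carrier →ₗ[A.carrier] Y.carrier}
    (hh : h ∈ ghomSet P Y b) :
    ∃ l ∈ ghomSet P X (b - a), ∃ hl : ∀ x, l x ∈ W, ∀ x, g ⟨l x, hl x⟩ = h x := by
  let g' : GMod.shift (a - b) (sb S X W hW) ⟶ GMod.shift (-b) Y := ⟨g, fun i x hx => by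
    have := hg (i - (a - b)) x hx
    have e : i - (a - b) + a = i - -b := by ring
    rw [e] at this
    exact this⟩
  let h' : P ⟶ GMod.shift (-b) Y := ⟨h, fun i x hx => by
    have := hh i x hx
    have e : i + b = i - -b := by ring
    rw [e] at this
    exact this⟩
  obtain ⟨l, hl⟩ := hP _ _ g' h' hs
  let l1 : P.carrier →ₗ[A.carrier] W := l.1
  refine ⟨W.subtype ∘ₗ l1, ?_, fun x => (l1 x).2, fun x => ?_⟩
  · intro i x hx
    have h1 : (l1 x).1 ∈ X.grading (i - (a - b)) := l.2 i x hx
    have e : i - (a - b) = i + (b - a) := by ring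
    rw [e] at h1
    exact h1
  · exact LinearMap.congr_fun (congrArg Subtype.val hl) x

/-- A graded isomorphism `W/W' ≅ N` gives a surjection `W → N` with kernel `W'`. -/
theorem sq_r {X N : GMod A} {W W' : Submodule A.carrier X.carrier} (h : SQIso X W W' N) :
    ∃ r : W →ₗ[A.carrier] N.carrier, Function.Surjective r ∧
      (∀ x, r x = 0 ↔ x.1 ∈ W') ∧ ∀ i (x : W), x.1 ∈ X.grading i → r x ∈ N.grading i := by
  obtain ⟨e, he⟩ := h
  refine ⟨e.toLinearMap ∘ₗ (W'.comap W.subtype).mkQ,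
    e.surjective.comp (Submodule.mkQ_surjective _), fun x => ?_, fun i x hx => ?_⟩
  · simp
  · rw [← he i]
    exact ⟨_, ⟨x, hx, rfl⟩, rfl⟩

/-- The presentation of `Δ(π)` supplied by the filtration of `P(π)`. -/
theorem exists_q (π : Idx) : ∃ q : (S.P π).carrier →ₗ[A.carrier] (S.Δ π).carrier,
    q ∈ ghomSet (S.P π) (S.Δ π) 0 ∧ Function.Surjective q ∧
    ∃ (Φ : GFilt (S.P π)) (N : ℕ), Φ.F N = ⊥ ∧ (∀ x, q x = 0 ↔ x ∈ Φ.F 1) ∧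
      ∀ n : ℕ, 1 ≤ n →
      (Subsingleton (sqMod (S.P π) (Φ.F n) (Φ.F (n + 1))) ∨
        ∃ σ : Idx, π < σ ∧ ∃ d : ℤ,
          SQIso (S.P π) (Φ.F n) (Φ.F (n + 1)) (GMod.shift d (S.Δ σ))) := by
  obtain ⟨Φ, ⟨N, hN⟩, h0, h1⟩ := S.ker_filt π
  obtain ⟨r, hr, hr', hr''⟩ := sq_r h0
  have ht : ∀ x, x ∈ Φ.F 0 := fun x => by rw [Φ.first]; trivial
  let j : (S.P π).carrier →ₗ[A.carrier] Φ.F 0 := LinearMap.codRestrict _ LinearMap.id ht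
  refine ⟨r ∘ₗ j, fun i x hx => ?_, fun y => ?_, Φ, N, hN, fun x => hr' _, h1⟩
  · rw [add_zero]
    exact hr'' i (j x) hx
  · obtain ⟨x, rfl⟩ := hr y
    exact ⟨x.1, rfl⟩

/-- A chosen projective presentation `P(π) → Δ(π)` whose kernel is filtered by the `Δ(σ)`,
`σ > π`. It comes from the filtration of `P(π)` and need not be the quotient map defining
`Δ(π)`. -/
noncomputable def qm (π : Idx) : (S.P π).carrier →ₗ[A.carrier] (S.Δ π).carrier :=
  (exists_q S π).choose

theorem qm_ghom (π : Idx) : qm S π ∈ ghomSet (S.P π) (S.Δ π) 0 := (exists_q S π).choose_spec.1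

theorem qm_surj (π : Idx) : Function.Surjective (qm S π) := (exists_q S π).choose_spec.2.1

theorem std_nontrivial (π : Idx) : ∃ x, qm S π x ≠ 0 := by
  obtain ⟨f, -, hf, -⟩ := S.pco_hom π
  by_contra! h
  refine hf (LinearMap.ext fun y => ?_)
  obtain ⟨x, rfl⟩ := qm_surj S π y
  rw [h x]
  simp

/-- `hom(P(τ), Δ(σ)) = 0` unless `τ ≤ σ`. -/
theorem std_hom_zero {τ σ : Idx} (hτ : ¬ τ ≤ σ) {d : ℤ}
    {f : (S.P τ).carrier →ₗ[A.carrier] (S.Δ σ).carrier} (hf : f ∈ ghomSet (S.P τ) (S.Δ σ) d) :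
    f = 0 := by
  obtain ⟨dm, hs, hk⟩ := S.std_def σ
  obtain ⟨l, hl, hlt, hl2⟩ := exists_lift S (S.proj τ) (X := S.P σ) (gsub_top _) (a := 0)
    (dm.1 ∘ₗ (⊤ : Submodule A.carrier (S.P σ).carrier).subtype)
    (fun i x hx => by rw [add_zero]; exact dm.2 i x.1 hx)
    (fun y => by obtain ⟨x, rfl⟩ := hs y; exact ⟨⟨x, trivial⟩, rfl⟩) hf
  ext x
  rw [← hl2 x]
  have : l x ∈ LinearMap.ker dm.1 := by
    rw [hk]
    refine Submodule.mem_iSup_of_mem ⟨τ, l⟩ (Submodule.mem_iSup_of_mem hτ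
      (Submodule.mem_iSup_of_mem ⟨_, hl⟩ ⟨x, rfl⟩))
  exact this

/-- `W/W'` is isomorphic to `q^c Δ(σ)`, witnessed by a lift `P(σ) → W` of the projective
presentation of `Δ(σ)`. -/
def Step (X : GMod A) (W W' : Submodule A.carrier X.carrier) (σ : Idx) (c : ℤ) : Prop :=
  ∃ p ∈ ghomSet (S.P σ) X c, (∀ x, p x ∈ W) ∧ (∀ w ∈ W, ∃ x, w - p x ∈ W') ∧
    ∀ x, p x ∈ W' ↔ qm S σ x = 0

theorem step_of_sq {X : GMod A} {W W' : Submodule A.carrier X.carrier} (hW : X.IsGSub W)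
    {σ : Idx} {c : ℤ} (h : SQIso X W W' (GMod.shift c (S.Δ σ))) : Step S X W W' σ c := by
  obtain ⟨r, hs, hk, hg⟩ := sq_r h
  let r' : W →ₗ[A.carrier] (S.Δ σ).carrier := r
  obtain ⟨l, hl, hlW, hl2⟩ := exists_lift S (S.proj σ) hW (Y := S.Δ σ) (a := -c) r'
    (fun i x hx => hg i x hx) hs (qm_ghom S σ)
  refine ⟨l, by simpa using hl, hlW, fun w hw => ?_, fun x => ?_⟩
  · obtain ⟨x, hx⟩ := qm_surj S σ (r' ⟨w, hw⟩)
    refine ⟨x, ?_⟩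
    rw [← hl2 x] at hx
    have : r (⟨w, hw⟩ - ⟨l x, hlW x⟩) = 0 := by
      rw [map_sub, sub_eq_zero]
      exact hx.symm
    exact (hk _).1 this
  · rw [← hl2 x]
    exact (hk ⟨l x, hlW x⟩).symm

theorem step_ne {X : GMod A} {W W' : Submodule A.carrier X.carrier} {σ : Idx} {c : ℤ}
    (h : Step S X W W' σ c) : W ≠ W' := by
  rintro rfl
  obtain ⟨p, -, h1, -, h3⟩ := h
  obtain ⟨x, hx⟩ := std_nontrivial S σ
  exact hx ((h3 x).1 (h1 x))

/-- The quotient map `W → W/W' ≅ q^c Δ(σ)` attached to a lift `p : P(σ) → W`. -/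
theorem step_r {X : GMod A} {W W' : Submodule A.carrier X.carrier} {σ : Idx} {c : ℤ}
    (hW' : X.IsGSub W') (hle : W' ≤ W) {p : (S.P σ).carrier →ₗ[A.carrier] X.carrier}
    (hp : p ∈ ghomSet (S.P σ) X c) (hpW : ∀ x, p x ∈ W) (hps : ∀ w ∈ W, ∃ x, w - p x ∈ W')
    (hpk : ∀ x, p x ∈ W' ↔ qm S σ x = 0) :
    ∃ r : W →ₗ[A.carrier] (S.Δ σ).carrier, (∀ x, r ⟨p x, hpW x⟩ = qm S σ x) ∧
      (∀ x, r x = 0 ↔ x.1 ∈ W') ∧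
      ∀ i (x : W), x.1 ∈ X.grading i → r x ∈ (S.Δ σ).grading (i - c) := by
  let g : W' × (S.P σ).carrier →ₗ[A.carrier] W :=
    LinearMap.coprod (Submodule.inclusion hle) (LinearMap.codRestrict W p hpW)
  have hgv : ∀ w x, (g (w, x)).1 = w.1 + p x := fun w x => by simp [g]
  obtain ⟨r, hr⟩ := exists_factor g (qm S σ ∘ₗ LinearMap.snd A.carrier _ _) (by
    rintro ⟨w, hw⟩
    obtain ⟨x, hx⟩ := hps w hw
    exact ⟨(⟨_, hx⟩, x), Subtype.ext (by rw [hgv]; simp)⟩) (by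
    rintro ⟨w, x⟩ h0
    have := hgv w x
    rw [h0] at this
    refine (hpk x).1 ?_
    have e : p x = - w.1 := by
      rw [eq_neg_iff_add_eq_zero, add_comm]; exact this.symm
    rw [e]
    exact W'.neg_mem w.2)
  have hr1 : ∀ x, r ⟨p x, hpW x⟩ = qm S σ x := fun x => by
    have := hr (0, x)
    have e : g (0, x) = ⟨p x, hpW x⟩ := Subtype.ext (by rw [hgv]; simp)
    rw [e] at this
    exact this
  have hr2 : ∀ x, x.1 ∈ W' → r x = 0 := fun x hx => by
    have := hr (⟨x.1, hx⟩, 0)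
    have e : g (⟨x.1, hx⟩, 0) = x := Subtype.ext (by rw [hgv]; simp)
    rw [e] at this
    rw [this]; simp
  refine ⟨r, hr1, fun x => ⟨fun h => ?_, hr2 x⟩, fun i x hx => ?_⟩
  · obtain ⟨y, hy⟩ := hps x.1 x.2
    have h1 : r (x - ⟨p y, hpW y⟩) = 0 := hr2 _ hy
    rw [map_sub, h, hr1, zero_sub, neg_eq_zero, ← hpk] at h1
    simpa using W'.add_mem hy h1
  · obtain ⟨y, hy⟩ := hps x.1 x.2
    have h1 := gsub_iff.1 hW' _ hy i
    rw [map_sub, cmp_of_mem X hx, cmp_map' hp] at h1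
    have h2 : r (x - ⟨p (cmp (S.P σ) (i - c) y), hpW _⟩) = 0 := hr2 _ h1
    rw [map_sub, hr1, sub_eq_zero] at h2
    rw [h2]
    simpa using qm_ghom S σ _ _ (cmp_mem (S.P σ) (i - c) y)

/-- A homogeneous map `P(τ) → W` lands in `W'` if `W/W' ≅ q^c Δ(σ)` and `τ ≰ σ`. -/
theorem lands_next {X : GMod A} {W W' : Submodule A.carrier X.carrier} {σ τ : Idx} {c d : ℤ}
    (hW' : X.IsGSub W') (hle : W' ≤ W) (h : Step S X W W' σ c) (hτ : ¬ τ ≤ σ)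
    {f : (S.P τ).carrier →ₗ[A.carrier] X.carrier} (hf : f ∈ ghomSet (S.P τ) X d)
    (hfW : ∀ x, f x ∈ W) (x) : f x ∈ W' := by
  obtain ⟨p, h1, h2, h3, h4⟩ := h
  obtain ⟨r, -, hr2, hr3⟩ := step_r S hW' hle h1 h2 h3 h4
  have : r ∘ₗ LinearMap.codRestrict W f hfW = 0 := by
    refine std_hom_zero S hτ (d := d - c) fun i x hx => ?_
    have := hr3 _ ⟨f x, hfW x⟩ (hf i x hx)
    rw [add_sub_assoc] at this
    exact this
  exact (hr2 ⟨f x, hfW x⟩).1 (LinearMap.congr_fun this x)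

/-- A homogeneous map `P(τ) → F n` lands in `F m`, `m ≥ n`, if no step `q^c Δ(σ)` with `τ ≤ σ`
occurs between them. -/
theorem lands_chain {X : GMod A} {F : ℕ → Submodule A.carrier X.carrier} {τ : Idx} {d : ℤ}
    (hgr : ∀ n, X.IsGSub (F n)) (hanti : ∀ n, F (n + 1) ≤ F n)
    (hst : ∀ n, F n = F (n + 1) ∨ ∃ σ c, Step S X (F n) (F (n + 1)) σ c)
    {f : (S.P τ).carrier →ₗ[A.carrier] X.carrier} (hf : f ∈ ghomSet (S.P τ) X d) {n m : ℕ}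
    (hnm : n ≤ m) (hlab : ∀ j, n ≤ j → j < m → ∀ σ c, Step S X (F j) (F (j + 1)) σ c → ¬ τ ≤ σ)
    (h : ∀ x, f x ∈ F n) : ∀ x, f x ∈ F m := by
  induction m, hnm using Nat.le_induction with
  | base => exact h
  | succ m hm ih =>
    have ih := ih fun j h1 h2 => hlab j h1 (by omega)
    rcases hst m with e | ⟨σ, c, hs⟩
    · rwa [← e]
    · exact lands_next S (hgr _) (hanti _) hs (hlab m hm (by omega) σ c hs) hf ih

theorem subsingleton_sq {X : GMod A} {W W' : Submodule A.carrier X.carrier} (hle : W' ≤ W)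
    (h : Subsingleton (sqMod X W W')) : W = W' := by
  refine le_antisymm (fun x hx => ?_) hle
  have := Subsingleton.elim ((W'.comap W.subtype).mkQ ⟨x, hx⟩) 0
  simpa using this

/-- A homogeneous map out of `P(π)` factors through `Δ(π)` as soon as the target receives no
map from any `P(σ)` with `σ > π`. -/
theorem kills_ker {X : GMod A} {π : Idx} {d : ℤ}
    {f : (S.P π).carrier →ₗ[A.carrier] X.carrier} (hf : f ∈ ghomSet (S.P π) X d)
    (h : ∀ σ, π < σ → ∀ (d' : ℤ) (g : (S.P σ).carrier →ₗ[A.carrier] X.carrier),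
      g ∈ ghomSet (S.P σ) X d' → g = 0) (x) (hx : qm S π x = 0) : f x = 0 := by
  obtain ⟨-, -, Φ, N, hN, hq, hst⟩ := (exists_q S π).choose_spec
  have key : ∀ j n, 1 ≤ n → N ≤ n + j → ∀ x ∈ Φ.F n, f x = 0 := by
    intro j
    induction j with
    | zero =>
      intro n _ hn x hx
      have : Φ.F n ≤ Φ.F N := antitone_nat_of_succ_le Φ.anti hn
      rw [hN] at this
      rw [(Submodule.mem_bot _).1 (this hx), map_zero]
    | succ j ih =>
      intro n h1 hn x hx
      have ih' := ih (n + 1) (by omega) (by omega)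
      rcases hst n h1 with e | ⟨σ, hσ, c, hs⟩
      · rw [subsingleton_sq (Φ.anti n) e] at hx
        exact ih' x hx
      · obtain ⟨p, hp, -, hp3, -⟩ := step_of_sq S (Φ.graded n) hs
        obtain ⟨y, hy⟩ := hp3 x hx
        have h0 := h σ hσ _ _ (ghom_comp hp hf)
        have h2 := ih' _ hy
        rw [map_sub, sub_eq_zero] at h2
        rw [h2]
        exact LinearMap.congr_fun h0 y
  exact key N 1 le_rfl (by omega) x ((hq x).1 hx)

/-- `P(π)` is graded-local: two proper graded submodules do not generate it. -/
theorem proj_local (π : Idx) {W W' : Submodule A.carrier (S.P π).carrier}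
    (hW : (S.P π).IsGSub W) (hW' : (S.P π).IsGSub W') (h : W ⊔ W' = ⊤) : W = ⊤ ∨ W' = ⊤ := by
  obtain ⟨p, hp, hc⟩ := S.cover π
  have hpg : p.1 ∈ ghomSet (S.P π) (S.L π) 0 := fun i x hx => by
    rw [add_zero]; exact p.2 i x hx
  have main : ∀ V : Submodule A.carrier (S.P π).carrier, (S.P π).IsGSub V →
      V = ⊤ ∨ V ≤ LinearMap.ker p.1 := by
    intro V hV
    rcases (S.simple π).2 _ (gsub_map hpg hV) with h | h
    · exact Or.inr (LinearMap.le_ker_iff_map.2 h)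
    · refine Or.inl (hc V hV (eq_top_iff.2 fun x _ => ?_))
      have : p.1 x ∈ V.map p.1 := by rw [h]; trivial
      obtain ⟨v, hv, hvx⟩ := this
      refine Submodule.mem_sup.2 ⟨v, hv, x - v, ?_, by abel⟩
      rw [LinearMap.mem_ker, map_sub, sub_eq_zero]
      exact hvx.symm
  rcases main W hW with h1 | h1
  · exact Or.inl h1
  rcases main W' hW' with h2 | h2
  · exact Or.inr h2
  exfalso
  have h3 : LinearMap.ker p.1 = ⊤ := eq_top_iff.2 (h ▸ sup_le h1 h2)
  obtain ⟨x, y, hxy⟩ := (S.simple π).1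
  obtain ⟨x', rfl⟩ := hp x
  obtain ⟨y', rfl⟩ := hp y
  refine hxy ?_
  have hx : x' ∈ LinearMap.ker p.1 := by rw [h3]; trivial
  have hy : y' ∈ LinearMap.ker p.1 := by rw [h3]; trivial
  rw [LinearMap.mem_ker.1 hx, LinearMap.mem_ker.1 hy]

/-! ### Finiteness: homogeneous generators and graded pieces -/

theorem exists_hgens (M : GMod A) : ∃ s : Finset M.carrier,
    Submodule.span A.carrier (s : Set M.carrier) = ⊤ ∧ ∀ x ∈ s, ∃ i, x ∈ M.grading i := by
  have h : Submodule.span A.carrier {x : M.carrier | ∃ i, x ∈ M.grading i} = ⊤ := by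
    rw [eq_top_iff]
    intro x _
    exact mem_of_cmp M ((Submodule.span A.carrier _).restrictScalars k) fun i =>
      Submodule.subset_span ⟨i, cmp_mem M i x⟩
  have hfg : (Submodule.span A.carrier {x : M.carrier | ∃ i, x ∈ M.grading i}).FG := by
    rw [h]; exact M.fg.1
  obtain ⟨s, hs, hs'⟩ := (Submodule.fg_span_iff_fg_span_finset_subset _).1 hfg
  exact ⟨s, by rw [← hs', h], fun x hx => hs hx⟩

/-- Graded pieces of finitely generated graded modules are finite-dimensional. -/
theorem fd (S : AHW A Idx) (M : GMod A) (d : ℤ) : FiniteDimensional k (M.grading d) := by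
  obtain ⟨s, hs, hdeg⟩ := exists_hgens M
  choose! deg hdeg using hdeg
  let B : ℤ → Submodule k M.carrier := fun e => ⨆ x ∈ s,
    (A.grading (e - deg x)).map
      ((LinearMap.toSpanSingleton A.carrier M.carrier x).restrictScalars k)
  have hB : ∀ e, B e ≤ M.grading e := by
    intro e
    refine iSup₂_le fun x hx => ?_
    rintro _ ⟨a, ha, rfl⟩
    have := M.smul_mem ha (hdeg x hx)
    rw [sub_add_cancel] at this
    exact this
  have htop : ∀ m, m ∈ ⨆ e, B e := by
    intro m
    have hm : m ∈ Submodule.span A.carrier (s : Set M.carrier) := by rw [hs]; trivial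
    obtain ⟨f, -, rfl⟩ := Submodule.mem_span_finset.1 hm
    refine Submodule.sum_mem _ fun x hx => ?_
    have ha : f x ∈ ⨆ i, A.grading i := by
      rw [A.internal.submodule_iSup_eq_top]; trivial
    refine Submodule.iSup_induction _ (motive := fun a => a • x ∈ ⨆ e, B e) ha ?_ (by simp) ?_
    · intro i a hai
      refine Submodule.mem_iSup_of_mem (i + deg x) (Submodule.mem_iSup_of_mem x
        (Submodule.mem_iSup_of_mem hx ⟨a, ?_, rfl⟩))
      rwa [add_sub_cancel_right]
    · intro a b h1 h2
      rw [add_smul]; exact Submodule.add_mem _ h1 h2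
  have hle : M.grading d ≤ B d := by
    intro x hx
    rw [← cmp_of_mem M hx]
    refine Submodule.iSup_induction _ (motive := fun y => cmp M d y ∈ B d) (htop x) ?_
      (by simp) ?_
    · intro i y hy
      by_cases h : i = d
      · subst h
        rwa [cmp_of_mem M (hB _ hy)]
      · rw [cmp_ne M (hB _ hy) h]; exact Submodule.zero_mem _
    · intro y z hy hz
      rw [map_add]; exact Submodule.add_mem _ hy hz
  have hBd : FiniteDimensional k (B d) := by
    have : ∀ e, FiniteDimensional k (A.grading e) := S.laur.2
    have h2 : ∀ x : M.carrier, FiniteDimensional k ((A.grading (d - deg x)).map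
      ((LinearMap.toSpanSingleton A.carrier M.carrier x).restrictScalars k)) :=
      fun x => inferInstance
    have h3 := Submodule.finiteDimensional_finset_sup s fun x => (A.grading (d - deg x)).map
      ((LinearMap.toSpanSingleton A.carrier M.carrier x).restrictScalars k)
    rwa [Finset.sup_eq_iSup] at h3
  exact Submodule.finiteDimensional_of_le hle

/-- A separated filtration is eventually zero in each degree. -/
theorem eventually_zero (S : AHW A Idx) {M : GMod A} (Φ : GFilt M) (d : ℤ) :
    ∃ n, ∀ m, n ≤ m → ∀ x ∈ Φ.F m, x ∈ M.grading d → x = 0 := by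
  have := fd S M d
  have hanti : Antitone Φ.F := antitone_nat_of_succ_le Φ.anti
  let f : ℕ →o (Submodule k (M.grading d))ᵒᵈ :=
    ⟨fun n => OrderDual.toDual (((Φ.F n).restrictScalars k).comap (M.grading d).subtype),
      fun a b h => OrderDual.toDual_le_toDual.2 (Submodule.comap_mono fun x hx => hanti h hx)⟩
  obtain ⟨n, hn⟩ := IsArtinian.monotone_stabilizes f
  refine ⟨n, fun m hm x hx hxd => Φ.separated x fun l => ?_⟩
  have hxn : x ∈ Φ.F n := hanti hm hx
  rcases le_total n l with h | h
  · have h1 : (⟨x, hxd⟩ : M.grading d) ∈ OrderDual.ofDual (f n) := hxn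
    rw [hn l h] at h1
    exact h1
  · exact hanti h hxn

/-! ### Vanishing of `ext¹` from standard modules, and extension of maps -/

/-- `ext¹(Δ(σ), Y) = 0` for all `σ`, expressed through the presentations `P(σ) → Δ(σ)`: every
homogeneous map from the kernel to `Y` extends to `P(σ)`. -/
def Good (Y : GMod A) : Prop :=
  ∀ (σ : Idx) (b : ℤ) (φ : LinearMap.ker (qm S σ) →ₗ[A.carrier] Y.carrier),
    (∀ i x, x.1 ∈ (S.P σ).grading i → φ x ∈ Y.grading (i + b)) →
    ∃ ψ ∈ ghomSet (S.P σ) Y b, ∀ x : LinearMap.ker (qm S σ), ψ x.1 = φ x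

/-- The pushout `E` of `P(σ) ← ker → Y` along `φ`, an extension of `q^b Δ(σ)` by `Y`, together
with a section `s` of `E → q^b Δ(σ)`. -/
theorem exists_pushout {Y : GMod A} {σ : Idx} (hY : Ext1Vanish (S.Δ σ) Y) (b : ℤ)
    (φ : LinearMap.ker (qm S σ) →ₗ[A.carrier] Y.carrier)
    (hφ : ∀ i x, x.1 ∈ (S.P σ).grading i → φ x ∈ Y.grading (i + b)) :
    ∃ (E : GMod A) (f : Y.carrier →ₗ[A.carrier] E.carrier)
      (j : (S.P σ).carrier →ₗ[A.carrier] E.carrier)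
      (s : (S.Δ σ).carrier →ₗ[A.carrier] E.carrier),
      f ∈ ghomSet Y E 0 ∧ j ∈ ghomSet (S.P σ) E b ∧ s ∈ ghomSet (S.Δ σ) E b ∧
      (∀ y x, f y + j x = 0 → ∃ h : x ∈ LinearMap.ker (qm S σ), y = φ ⟨x, h⟩) ∧
      (∀ x : LinearMap.ker (qm S σ), f (φ x) + j x.1 = 0) ∧
      ∀ x, ∃ y, f y = s (qm S σ x) - j x := by
  let K := LinearMap.ker (qm S σ)
  have hK : (S.P σ).IsGSub K := gsub_ker (qm_ghom S σ)
  let Q := pr Y (GMod.shift b (S.P σ))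
  let γ : K →ₗ[A.carrier] (Y.carrier × (S.P σ).carrier) := LinearMap.prod φ K.subtype
  let W : Submodule A.carrier (Y.carrier × (S.P σ).carrier) := LinearMap.range γ
  have hγ : (γ : (sb S (S.P σ) K hK).carrier →ₗ[A.carrier] Q.carrier) ∈
      ghomSet (sb S (S.P σ) K hK) Q b := fun i x hx =>
    ⟨hφ i x hx, by
      change x.1 ∈ (S.P σ).grading (i + b - b)
      rw [add_sub_cancel_right]; exact hx⟩
  have hW : Q.IsGSub W := gsub_range hγ
  let f : Y.carrier →ₗ[A.carrier] ((Y.carrier × (S.P σ).carrier) ⧸ W) :=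
    W.mkQ ∘ₗ LinearMap.inl A.carrier Y.carrier (S.P σ).carrier
  let j : (S.P σ).carrier →ₗ[A.carrier] ((Y.carrier × (S.P σ).carrier) ⧸ W) :=
    W.mkQ ∘ₗ LinearMap.inr A.carrier Y.carrier (S.P σ).carrier
  have hfj : ∀ y x, f y + j x = W.mkQ (y, x) := fun y x => by
    change W.mkQ (y, 0) + W.mkQ (0, x) = _
    rw [← map_add, Prod.mk_add_mk, add_zero, zero_add]
  have hfj0 : ∀ y x, f y + j x = 0 ↔ ∃ h : x ∈ K, y = φ ⟨x, h⟩ := fun y x => by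
    rw [hfj, ← LinearMap.mem_ker, Submodule.ker_mkQ]
    constructor
    · rintro ⟨z, hz⟩
      have h1 : φ z = y := congrArg Prod.fst hz
      have h2 : z.1 = x := congrArg Prod.snd hz
      subst h2
      exact ⟨z.2, h1.symm⟩
    · rintro ⟨h, rfl⟩
      exact ⟨⟨x, h⟩, rfl⟩
  let g0 : (Y.carrier × (S.P σ).carrier) →ₗ[A.carrier] (S.Δ σ).carrier :=
    qm S σ ∘ₗ LinearMap.snd A.carrier Y.carrier (S.P σ).carrier
  have hg0 : ∀ x ∈ W, g0 x = 0 := by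
    rintro _ ⟨x, rfl⟩
    exact x.2
  let g : ((Y.carrier × (S.P σ).carrier) ⧸ W) →ₗ[A.carrier] (S.Δ σ).carrier := W.liftQ g0 hg0
  have hgf : ∀ y, g (f y) = 0 := fun y => map_zero (qm S σ)
  have hgj : ∀ x, g (j x) = qm S σ x := fun x => rfl
  have hsurj : ∀ z, ∃ y x, z = f y + j x := fun z => by
    obtain ⟨⟨y, x⟩, rfl⟩ := W.mkQ_surjective z
    exact ⟨y, x, (hfj y x).symm⟩
  have hgk : ∀ z, g z = 0 → ∃ y, f y = z := fun z hz => by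
    obtain ⟨y, x, rfl⟩ := hsurj z
    rw [map_add, hgf, hgj, zero_add] at hz
    refine ⟨y - φ ⟨x, hz⟩, ?_⟩
    have h0 := (hfj0 (φ ⟨x, hz⟩) x).2 ⟨hz, rfl⟩
    rw [map_sub, sub_eq_iff_eq_add, add_assoc, add_comm (j x), h0, add_zero]
  let fm : Y ⟶ qt Q W hW := ⟨f, fun i x hx => ⟨(x, 0), ⟨hx, Submodule.zero_mem _⟩, rfl⟩⟩
  let gm : qt Q W hW ⟶ GMod.shift b (S.Δ σ) := ⟨g, by
    rintro i _ ⟨x, hx, rfl⟩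
    have := qm_ghom S σ _ _ hx.2
    rw [add_zero] at this
    exact this⟩
  obtain ⟨s, hs⟩ := hY b (qt Q W hW) fm gm (by
    refine (injective_iff_map_eq_zero f).2 fun y hy => ?_
    obtain ⟨h, e⟩ := (hfj0 y 0).1 (by rw [hy, map_zero, add_zero])
    rw [e]
    exact map_zero φ) (by
    intro z
    obtain ⟨x, rfl⟩ := qm_surj S σ z
    exact ⟨j x, hgj x⟩) (by
    ext z
    constructor
    · rintro ⟨y, rfl⟩
      exact hgf y
    · exact hgk z)
  let s1 : (S.Δ σ).carrier →ₗ[A.carrier] ((Y.carrier × (S.P σ).carrier) ⧸ W) := s.1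
  have hs' : ∀ z, g (s1 z) = z := fun z => LinearMap.congr_fun (congrArg Subtype.val hs) z
  have hgs : ∀ x, g (s1 (qm S σ x) - j x) = 0 := fun x => by
    rw [map_sub, hs', hgj, sub_self]
  refine ⟨qt Q W hW, f, j, s1, fun i x hx => ?_, fun i x hx => ?_, fun i x hx => ?_,
    fun y x => (hfj0 y x).1, fun x => (hfj0 _ _).2 ⟨x.2, rfl⟩, fun x => hgk _ (hgs x)⟩
  · rw [add_zero]
    exact fm.2 i x hx
  · refine ⟨(0, x), ⟨Submodule.zero_mem _, ?_⟩, rfl⟩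
    change x ∈ (S.P σ).grading (i + b - b)
    rw [add_sub_cancel_right]; exact hx
  · refine s.2 (i + b) x ?_
    change x ∈ (S.Δ σ).grading (i + b - b)
    rw [add_sub_cancel_right]; exact hx

theorem good_of_ext {Y : GMod A} (hY : ∀ σ, Ext1Vanish (S.Δ σ) Y) : Good S Y := by
  intro σ b φ hφ
  obtain ⟨E, f, j, s, hf, hj, hs, h1, h2, h3⟩ := exists_pushout S (hY σ) b φ hφ
  have hinj : Function.Injective f := (injective_iff_map_eq_zero f).2 fun y hy => by
    obtain ⟨h, e⟩ := h1 y 0 (by rw [hy, map_zero, add_zero])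
    rw [e]
    exact map_zero φ
  choose u hu using h3
  let ψ : (S.P σ).carrier →ₗ[A.carrier] Y.carrier :=
    { toFun := u
      map_add' := fun x y => hinj (by simp only [map_add, hu]; abel)
      map_smul' := fun a x => hinj (by simp only [map_smul, hu, RingHom.id_apply, smul_sub]) }
  have hψ : ∀ x, f (ψ x) = s (qm S σ x) - j x := hu
  refine ⟨ψ, fun i x hx => ?_, fun x => hinj ?_⟩
  · have h4 : s (qm S σ x) - j x ∈ E.grading (i + b) := by
      refine Submodule.sub_mem _ (hs i _ ?_) (hj i x hx)
      simpa using qm_ghom S σ i x hx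
    have h5 : cmp Y (i + b) (ψ x) = ψ x := hinj (by
      have := cmp_map hf (ψ x) (i + b)
      rw [add_zero] at this
      rw [← this, hψ, cmp_of_mem _ h4])
    rw [← h5]
    exact cmp_mem _ _ _
  · rw [hψ, show qm S σ x.1 = 0 from x.2, map_zero, zero_sub, eq_comm, eq_neg_iff_add_eq_zero]
    exact h2 x

/-- Modules with a (possibly infinite, separated) proper costandard filtration are `Good`: a
solution modulo `F n` for large `n` is a solution, since the kernel of `P(σ) → Δ(σ)` has finitely
many generators and the filtration is eventually zero in their degrees. -/
theorem good_of_pcfilt {Y : GMod A} (hY : HasPCFilt S Y) : Good S Y := by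
  obtain ⟨Φ, hΦ⟩ := hY
  intro σ b φ hφ
  have hK : (S.P σ).IsGSub (LinearMap.ker (qm S σ)) := gsub_ker (qm_ghom S σ)
  -- a solution modulo `F n` is corrected to one modulo `F (n + 1)` by lifting to `F n` an extension
  -- of the error term, which takes values in a proper costandard module
  have key : ∀ n, ∃ ψ ∈ ghomSet (S.P σ) Y b, ∀ x : LinearMap.ker (qm S σ),
      ψ x.1 - φ x ∈ Φ.F n := by
    intro n
    induction n with
    | zero => exact ⟨0, ghom_zero _ _ _, fun x => by rw [Φ.first]; trivial⟩
    | succ n ih =>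
      obtain ⟨ψ, hψ, hψn⟩ := ih
      rcases hΦ n with e | ⟨_, ⟨π, rfl⟩, c, hs⟩
      · rw [← subsingleton_sq (Φ.anti n) e]
        exact ⟨ψ, hψ, hψn⟩
      · obtain ⟨r, hr, hrk, hrg⟩ := sq_r hs
        let r' : Φ.F n →ₗ[A.carrier] (S.pco π).carrier := r
        let χ : LinearMap.ker (qm S σ) →ₗ[A.carrier] Φ.F n :=
          LinearMap.codRestrict _ (ψ ∘ₗ (LinearMap.ker (qm S σ)).subtype - φ) hψn
        obtain ⟨θ, hθ, hθ2⟩ := good_of_ext S (fun τ => S.pco_ext π τ) σ (b - c) (r' ∘ₗ χ) (by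
          intro i x hx
          have : (χ x).1 ∈ Y.grading (i + b) :=
            Submodule.sub_mem _ (hψ i _ hx) (hφ i x hx)
          have := hrg _ _ this
          change r (χ x) ∈ (S.pco π).grading (i + b - c) at this
          rw [add_sub_assoc] at this
          exact this)
        obtain ⟨l, hl, hlF, hl2⟩ := exists_lift S (S.proj σ) (Φ.graded n) (Y := S.pco π)
          (a := -c) r' (fun i x hx => hrg i x hx) hr hθ
        refine ⟨ψ - l, ghom_sub hψ (by simpa using hl), fun x => ?_⟩
        have : r (χ x - ⟨l x.1, hlF _⟩) = 0 := by
          rw [map_sub, sub_eq_zero]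
          exact ((hl2 x.1).trans (hθ2 x)).symm
        have := (hrk _).1 this
        have e : (ψ - l) x.1 - φ x = (χ x - ⟨l x.1, hlF _⟩ : Φ.F n).1 := by
          change ψ x.1 - l x.1 - φ x = (ψ x.1 - φ x) - l x.1
          abel
        rw [e]; exact this
  obtain ⟨s, hs, hdeg⟩ := exists_hgens (sb S (S.P σ) _ hK)
  choose! deg hdeg using hdeg
  choose n hn using eventually_zero S Φ
  obtain ⟨ψ, hψ, hψn⟩ := key (s.sup fun x => n (deg x + b))
  refine ⟨ψ, hψ, fun x => ?_⟩
  let δ : LinearMap.ker (qm S σ) →ₗ[A.carrier] Y.carrier :=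
    ψ ∘ₗ (LinearMap.ker (qm S σ)).subtype - φ
  have hδ : δ = 0 := by
    refine LinearMap.ext_on hs ?_
    intro y hy
    refine hn (deg y + b) _ (Finset.le_sup (f := fun x => n (deg x + b)) hy) _ (hψn y) ?_
    exact Submodule.sub_mem _ (hψ _ _ (hdeg y hy)) (hφ _ y (hdeg y hy))
  exact sub_eq_zero.1 (LinearMap.congr_fun hδ x)

/-- A direct summand of a `Good` module is `Good`. -/
theorem good_retract {Y Z : GMod A} (hY : Good S Y) {i : Z.carrier →ₗ[A.carrier] Y.carrier}
    {p : Y.carrier →ₗ[A.carrier] Z.carrier} (hi : i ∈ ghomSet Z Y 0) (hp : p ∈ ghomSet Y Z 0)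
    (h : ∀ x, p (i x) = x) : Good S Z := by
  intro σ b φ hφ
  obtain ⟨ψ, h1, h2⟩ := hY σ b (i ∘ₗ φ) (fun j x hx => by
    have := hi _ _ (hφ j x hx)
    rw [add_zero] at this
    exact this)
  refine ⟨p ∘ₗ ψ, by simpa using ghom_comp h1 hp, fun x => ?_⟩
  rw [LinearMap.comp_apply, h2, LinearMap.comp_apply, h]

/-- A filtration of length `N` of `X` relative to `D`, with subquotients `0` or `q^c Δ(σ)`. -/
structure RF (X : GMod A) (D : Submodule A.carrier X.carrier) (N : ℕ)
    (F : ℕ → Submodule A.carrier X.carrier) : Prop where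
  top : F 0 = ⊤
  bot : F N = D
  anti : ∀ n, F (n + 1) ≤ F n
  gr : ∀ n, X.IsGSub (F n)
  step : ∀ n, F n = F (n + 1) ∨ ∃ σ c, Step S X (F n) (F (n + 1)) σ c

/-- If `W/W' ≅ q^c Δ(σ)`, homogeneous maps from `W'` to a `Good` module extend to `W`. -/
theorem extend_step {X Y : GMod A} (hY : Good S Y) {W W' : Submodule A.carrier X.carrier}
    (hW' : X.IsGSub W') (hle : W' ≤ W) {σ : Idx} {c b : ℤ} (h : Step S X W W' σ c)
    (φ : W' →ₗ[A.carrier] Y.carrier)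
    (hφ : ∀ i x, x.1 ∈ X.grading i → φ x ∈ Y.grading (i + b)) :
    ∃ ψ : W →ₗ[A.carrier] Y.carrier, (∀ i x, x.1 ∈ X.grading i → ψ x ∈ Y.grading (i + b)) ∧
      ∀ x (hx : x ∈ W'), ψ ⟨x, hle hx⟩ = φ ⟨x, hx⟩ := by
  obtain ⟨p, hp, hpW, hps, hpk⟩ := h
  obtain ⟨θ, hθ, hθφ⟩ := hY σ (c + b)
    (φ ∘ₗ LinearMap.codRestrict W' (p ∘ₗ (LinearMap.ker (qm S σ)).subtype)
      (fun x => (hpk x.1).2 x.2))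
    (fun i x hx => by rw [← add_assoc]; exact hφ _ _ (hp _ _ hx))
  -- `W` is the quotient of `W' ⊕ P(σ)` by the antidiagonal copy of the kernel of `P(σ) → Δ(σ)`
  let g : W' × (S.P σ).carrier →ₗ[A.carrier] W :=
    LinearMap.coprod (Submodule.inclusion hle) (LinearMap.codRestrict W p hpW)
  have hgv : ∀ w x, (g (w, x)).1 = w.1 + p x := fun w x => by simp [g]
  obtain ⟨ψ, hψ⟩ := exists_factor g (LinearMap.coprod φ θ) (by
    rintro ⟨w, hw⟩
    obtain ⟨x, hx⟩ := hps w hw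
    exact ⟨(⟨_, hx⟩, x), Subtype.ext (by rw [hgv]; simp)⟩) (by
    rintro ⟨w, x⟩ h0
    have h1 := hgv w x
    rw [h0] at h1
    have e : p x = - w.1 := by
      rw [eq_neg_iff_add_eq_zero, add_comm]; exact h1.symm
    have hx : qm S σ x = 0 := (hpk x).1 (by rw [e]; exact W'.neg_mem w.2)
    have h2 := hθφ ⟨x, hx⟩
    rw [LinearMap.coprod_apply, h2, LinearMap.comp_apply, ← map_add]
    have : w + LinearMap.codRestrict W' (p ∘ₗ (LinearMap.ker (qm S σ)).subtype)
      (fun x => (hpk x.1).2 x.2) ⟨x, hx⟩ = 0 := Subtype.ext h1.symm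
    rw [this, map_zero])
  refine ⟨ψ, fun i x hx => ?_, fun x hx => ?_⟩
  · obtain ⟨y, hy⟩ := hps x.1 x.2
    have h1 := gsub_iff.1 hW' _ hy i
    rw [map_sub, cmp_of_mem X hx, cmp_map' hp] at h1
    set y' := cmp (S.P σ) (i - c) y
    have hy' : y' ∈ (S.P σ).grading (i - c) := cmp_mem _ _ _
    have e : g (⟨_, h1⟩, y') = x := Subtype.ext (by rw [hgv]; simp)
    rw [← e, hψ, LinearMap.coprod_apply]
    have hpy := hp _ _ hy'
    rw [sub_add_cancel] at hpy
    refine Submodule.add_mem _ (hφ i _ (Submodule.sub_mem _ hx hpy)) ?_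
    have := hθ _ _ hy'
    rw [← add_assoc, sub_add_cancel] at this
    exact this
  · have e : g (⟨x, hx⟩, 0) = ⟨x, hle hx⟩ := Subtype.ext (by rw [hgv]; simp)
    rw [← e, hψ]
    simp

/-- If `X/D` has a finite standard filtration, homogeneous maps from `D` to a `Good` module
extend to `X`. -/
theorem extend_chain {X Y : GMod A} (hY : Good S Y) {D : Submodule A.carrier X.carrier} {N : ℕ}
    {F : ℕ → Submodule A.carrier X.carrier} (hF : RF S X D N F) {b : ℤ}
    (φ : D →ₗ[A.carrier] Y.carrier)
    (hφ : ∀ i x, x.1 ∈ X.grading i → φ x ∈ Y.grading (i + b)) :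
    ∃ ψ ∈ ghomSet X Y b, ∀ x (hx : x ∈ D), ψ x = φ ⟨x, hx⟩ := by
  have key : ∀ j n, n + j = N → ∃ ψ : F n →ₗ[A.carrier] Y.carrier,
      (∀ i x, x.1 ∈ X.grading i → ψ x ∈ Y.grading (i + b)) ∧
      ∀ x (hx : x ∈ D), ∃ hx' : x ∈ F n, ψ ⟨x, hx'⟩ = φ ⟨x, hx⟩ := by
    intro j
    induction j with
    | zero =>
      intro n hn
      have e : F n = D := by rw [← hF.bot, ← hn]; rfl
      subst e
      exact ⟨φ, hφ, fun x hx => ⟨hx, rfl⟩⟩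
    | succ j ih =>
      intro n hn
      obtain ⟨ψ, h1, h2⟩ := ih (n + 1) (by omega)
      rcases hF.step n with e | ⟨σ, c, hs⟩
      · rw [e]; exact ⟨ψ, h1, h2⟩
      · obtain ⟨ψ', h3, h4⟩ := extend_step S hY (hF.gr _) (hF.anti n) hs ψ h1
        refine ⟨ψ', h3, fun x hx => ?_⟩
        obtain ⟨h5, h6⟩ := h2 x hx
        exact ⟨hF.anti n h5, (h4 x h5).trans h6⟩
  obtain ⟨ψ, h1, h2⟩ := key N 0 (by omega)
  have ht : ∀ x, x ∈ F 0 := fun x => by rw [hF.top]; trivial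
  refine ⟨ψ ∘ₗ LinearMap.codRestrict _ LinearMap.id ht, fun i x hx => h1 i ⟨x, ht x⟩ hx,
    fun x hx => ?_⟩
  obtain ⟨h3, h4⟩ := h2 x hx
  exact h4

/-! ### Finiteness of standard filtrations and splitting off a maximal label -/

theorem step_sup {X : GMod A} {W W' D : Submodule A.carrier X.carrier} {σ : Idx} {c : ℤ}
    (hle : W' ≤ W) (hD : W ⊓ D ≤ W') (h : Step S X W W' σ c) :
    Step S X (W ⊔ D) (W' ⊔ D) σ c := by
  obtain ⟨p, hp, h1, h2, h3⟩ := h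
  refine ⟨p, hp, fun x => Submodule.mem_sup_left (h1 x), fun w hw => ?_, fun x => ?_⟩
  · obtain ⟨y, hy, z, hz, rfl⟩ := Submodule.mem_sup.1 hw
    obtain ⟨x, hx⟩ := h2 y hy
    refine ⟨x, ?_⟩
    rw [add_sub_right_comm]
    exact Submodule.add_mem_sup hx hz
  · rw [← h3]
    refine ⟨fun hx => ?_, fun hx => Submodule.mem_sup_left hx⟩
    obtain ⟨y, hy, z, hz, e⟩ := Submodule.mem_sup.1 hx
    have hzW : z ∈ W := by
      rw [← add_sub_cancel_left y z, e]
      exact W.sub_mem (h1 x) (hle hy)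
    rw [← e]
    exact W'.add_mem hy (hD ⟨hzW, hz⟩)

theorem step_map {X Y : GMod A} {h : X.carrier →ₗ[A.carrier] Y.carrier} (hh : h ∈ ghomSet X Y 0)
    {W W' : Submodule A.carrier X.carrier} {σ : Idx} {c : ℤ}
    (hle : W' ≤ W) (hk : W ⊓ LinearMap.ker h ≤ W') (hs : Step S X W W' σ c) :
    Step S Y (W.map h) (W'.map h) σ c := by
  obtain ⟨p, hp, h1, h2, h3⟩ := hs
  refine ⟨h ∘ₗ p, by simpa using ghom_comp hp hh, fun x => ⟨_, h1 x, rfl⟩, ?_, fun x => ?_⟩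
  · rintro _ ⟨w, hw, rfl⟩
    obtain ⟨x, hx⟩ := h2 w hw
    exact ⟨x, _, hx, map_sub _ _ _⟩
  · rw [← h3]
    refine ⟨?_, fun hx => ⟨_, hx, rfl⟩⟩
    rintro ⟨y, hy, e⟩
    have : p x - y ∈ W' := hk ⟨W.sub_mem (h1 x) (hle hy), by
      rw [SetLike.mem_coe, LinearMap.mem_ker, map_sub, e, LinearMap.comp_apply, sub_self]⟩
    simpa using W'.add_mem this hy

/-- A relative filtration over `D` descends to a filtration of `X/D`. -/
theorem rf_quot {X : GMod A} {D : Submodule A.carrier X.carrier} (hD : X.IsGSub D) {N : ℕ}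
    {F : ℕ → Submodule A.carrier X.carrier} (hF : RF S X D N F) :
    ∃ G, RF S (qt X D hD) ⊥ N G := by
  let h : X.carrier →ₗ[A.carrier] (qt X D hD).carrier := D.mkQ
  have hh : h ∈ ghomSet X (qt X D hD) 0 := mkQ_ghom X D hD
  have hk : LinearMap.ker h = D := Submodule.ker_mkQ D
  have hanti : Antitone F := antitone_nat_of_succ_le hF.anti
  refine ⟨fun n => (F n).map h, ?_, ?_, fun n => Submodule.map_mono (hF.anti n),
    fun n => gsub_map hh (hF.gr n), fun n => ?_⟩
  · rw [hF.top, Submodule.map_top, LinearMap.range_eq_top]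
    exact D.mkQ_surjective
  · rw [hF.bot, ← LinearMap.le_ker_iff_map, hk]
  · rcases hF.step n with e | ⟨σ, c, hs⟩
    · exact Or.inl (by rw [← e])
    · by_cases hn : n + 1 ≤ N
      · refine Or.inr ⟨σ, c, step_map S hh (hF.anti n) ?_ hs⟩
        rw [hk, ← hF.bot]
        exact inf_le_right.trans (hanti hn)
      · left
        have h1 : ∀ l, N ≤ l → (F l).map h = ⊥ := fun l hl => by
          rw [← LinearMap.le_ker_iff_map, hk, ← hF.bot]
          exact hanti hl
        rw [h1 n (by omega), h1 (n + 1) (by omega)]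

/-- In a Noetherian module only finitely many layers of a descending filtration can be
complemented by a nonzero submodule. -/
theorem layers_finite {R V : Type} [Ring R] [AddCommGroup V] [Module R V] [IsNoetherian R V]
    {F : ℕ → Submodule R V} (D : ℕ → Submodule R V) (h1 : ∀ n, D n ≤ F n)
    (hF : ∀ n, F (n + 1) ≤ F n) (h2 : ∀ n, ∀ x ∈ D n, x ∈ F (n + 1) → x = 0) :
    ∃ n, ∀ m, n ≤ m → D m = ⊥ := by
  let B : ℕ → Submodule R V := fun n => Nat.rec ⊥ (fun n b => b ⊔ D n) n
  have hBs : ∀ n, B (n + 1) = B n ⊔ D n := fun n => rfl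
  have hB : ∀ n, ∀ x ∈ B n, x ∈ F n → x = 0 := by
    intro n
    induction n with
    | zero => exact fun x hx _ => hx
    | succ n ih =>
      intro x hx hxF
      rw [hBs] at hx
      obtain ⟨b, hb, d, hd, rfl⟩ := Submodule.mem_sup.1 hx
      have hb0 : b = 0 := ih b hb (by
        have := (F n).sub_mem (hF n hxF) (h1 n hd)
        rwa [add_sub_cancel_right] at this)
      rw [hb0, zero_add] at hxF ⊢
      exact h2 n d hd hxF
  let f : ℕ →o Submodule R V := ⟨B, monotone_nat_of_le_succ fun n => by rw [hBs]; exact le_sup_left⟩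
  obtain ⟨n, hn⟩ := monotone_stabilizes_iff_noetherian.2 inferInstance f
  refine ⟨n, fun m hm => (Submodule.eq_bot_iff _).2 fun x hx => ?_⟩
  refine hB m x ?_ (h1 m hx)
  have e1 : B n = B m := hn m hm
  have e2 : B n = B (m + 1) := hn (m + 1) (by omega)
  rw [← e1, e2, hBs]
  exact Submodule.mem_sup_right hx

/-- Each label occurs only finitely often in a standard filtration. Otherwise let `π` be maximal
among the labels occurring infinitely often: the maps `P(π) → F n` attached to its occurrences far
down factor through `Δ(π)` and embed it, so they produce an infinite direct sum inside a
Noetherian module. -/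
theorem labels_finite {X : GMod A} (Φ : GFilt X)
    (hst : ∀ n, Φ.F n = Φ.F (n + 1) ∨ ∃ σ c, Step S X (Φ.F n) (Φ.F (n + 1)) σ c) (σ : Idx) :
    ∃ n, ∀ m, n ≤ m → ∀ c, ¬ Step S X (Φ.F m) (Φ.F (m + 1)) σ c := by
  by_contra hσ
  let I : Set Idx := {σ | ¬ ∃ n, ∀ m, n ≤ m → ∀ c, ¬ Step S X (Φ.F m) (Φ.F (m + 1)) σ c}
  obtain ⟨π, hπ⟩ := I.toFinite.exists_maximal ⟨σ, hσ⟩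
  have hfin : ∀ τ, π < τ → ∃ n, ∀ m, n ≤ m → ∀ c, ¬ Step S X (Φ.F m) (Φ.F (m + 1)) τ c := by
    intro τ hτ
    by_contra h
    exact absurd (hπ.2 (show τ ∈ I from h) hτ.le) (not_le_of_gt hτ)
  choose! b hb using hfin
  set n0 := Finset.univ.sup b
  have hbn : ∀ τ, b τ ≤ n0 := fun τ => Finset.le_sup (Finset.mem_univ τ)
  have hanti : Antitone Φ.F := antitone_nat_of_succ_le Φ.anti
  -- beyond `n0` no label larger than `π` occurs
  have hvan : ∀ τ, π < τ → ∀ (d : ℤ) (f : (S.P τ).carrier →ₗ[A.carrier] X.carrier),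
      f ∈ ghomSet (S.P τ) X d → (∀ x, f x ∈ Φ.F n0) → ∀ x, f x = 0 := by
    intro τ hτ d f hf hf0 x
    refine Φ.separated _ fun n => ?_
    rcases le_total n0 n with h | h
    · refine lands_chain S Φ.graded Φ.anti hst hf h (fun j h1 _ ρ c hs hle => ?_) hf0 x
      exact hb ρ (hτ.trans_le hle) j ((hbn ρ).trans h1) c hs
    · exact hanti h (hf0 x)
  have hex : ∀ n, ∃ D : Submodule A.carrier X.carrier, D ≤ Φ.F n ∧
      (∀ x ∈ D, x ∈ Φ.F (n + 1) → x = 0) ∧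
      (n0 ≤ n → (∃ c, Step S X (Φ.F n) (Φ.F (n + 1)) π c) → D ≠ ⊥) := by
    intro n
    by_cases h : n0 ≤ n ∧ ∃ c, Step S X (Φ.F n) (Φ.F (n + 1)) π c
    · obtain ⟨hn, c, p, hp, h1, h2, h3⟩ := h
      have hpn : ∀ x, p x ∈ Φ.F n0 := fun x => hanti hn (h1 x)
      have hk := kills_ker S (X := sb S X (Φ.F n0) (Φ.graded n0)) (π := π) (d := c)
        (f := LinearMap.codRestrict (Φ.F n0) p hpn) (fun i x hx => hp i x hx) (by
          intro τ hτ d g hg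
          let g' : (S.P τ).carrier →ₗ[A.carrier] Φ.F n0 := g
          refine LinearMap.ext fun x => Subtype.ext ?_
          exact hvan τ hτ d ((Φ.F n0).subtype ∘ₗ g') (fun i x hx => hg i x hx)
            (fun x => (g' x).2) x)
      refine ⟨LinearMap.range p, ?_, ?_, fun _ _ h0 => ?_⟩
      · rintro _ ⟨x, rfl⟩
        exact h1 x
      · rintro _ ⟨x, rfl⟩ hx
        exact congrArg Subtype.val (hk x ((h3 x).1 hx))
      · obtain ⟨x, hx⟩ := std_nontrivial S π
        refine hx ((h3 x).1 ?_)
        have : p x ∈ LinearMap.range p := ⟨x, rfl⟩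
        rw [h0, Submodule.mem_bot] at this
        rw [this]
        exact Submodule.zero_mem _
    · exact ⟨⊥, bot_le, fun x hx _ => hx, fun h1 h2 => absurd ⟨h1, h2⟩ h⟩
  choose D hD1 hD2 hD3 using hex
  have := noeth S X
  obtain ⟨n, hn⟩ := layers_finite D hD1 Φ.anti hD2
  refine hπ.1 ⟨max n n0, fun m hm c hs => ?_⟩
  exact hD3 m (le_of_max_le_right hm) ⟨c, hs⟩ (hn m (le_of_max_le_left hm))

/-- Every standard filtration is finite. -/
theorem dfilt_finite {X : GMod A} (Φ : GFilt X)
    (hst : ∀ n, Φ.F n = Φ.F (n + 1) ∨ ∃ σ c, Step S X (Φ.F n) (Φ.F (n + 1)) σ c) :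
    ∃ N, Φ.F N = ⊥ := by
  choose b hb using labels_finite S Φ hst
  set n0 := Finset.univ.sup b
  have hbn : ∀ τ, b τ ≤ n0 := fun τ => Finset.le_sup (Finset.mem_univ τ)
  have hanti : Antitone Φ.F := antitone_nat_of_succ_le Φ.anti
  have hcon : ∀ n, n0 ≤ n → Φ.F n = Φ.F n0 := by
    intro n hn
    induction n, hn using Nat.le_induction with
    | base => rfl
    | succ n hn ih =>
      rcases hst n with e | ⟨σ, c, hs⟩
      · rw [← e, ih]
      · exact absurd hs (hb σ n ((hbn σ).trans hn) c)
  refine ⟨n0, (Submodule.eq_bot_iff _).2 fun x hx => Φ.separated x fun n => ?_⟩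
  rcases le_total n0 n with h | h
  · rw [hcon n h]; exact hx
  · exact hanti h hx

theorem rf_of_filt {X : GMod A} (Φ : GFilt X) (h : FiltBy X Φ (Set.range S.Δ)) :
    ∃ N, RF S X ⊥ N Φ.F := by
  have hst : ∀ n, Φ.F n = Φ.F (n + 1) ∨ ∃ σ c, Step S X (Φ.F n) (Φ.F (n + 1)) σ c := by
    intro n
    rcases h n with e | ⟨_, ⟨σ, rfl⟩, c, hs⟩
    · exact Or.inl (subsingleton_sq (Φ.anti n) e)
    · exact Or.inr ⟨σ, c, step_of_sq S (Φ.graded n) hs⟩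
  obtain ⟨N, hN⟩ := dfilt_finite S Φ hst
  exact ⟨N, Φ.first, hN, Φ.anti, Φ.graded, hst⟩

/-- Let `π` be maximal among the labels of a finite standard filtration of `X`, and `e` a
homogeneous idempotent of `X`. Then `X` contains a copy of `Δ(π)`, on which `e` is `1` or `0`,
such that the quotient has a standard filtration with one step less. The copy is the image of
`e p` or `(1 - e) p`, where `p : P(π) → X` is attached to the first occurrence of `π`; one of
the two works because `P(π)` is local. -/
theorem peel {X : GMod A} {N : ℕ} {F : ℕ → Submodule A.carrier X.carrier} (hF : RF S X ⊥ N F)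
    {e : X.carrier →ₗ[A.carrier] X.carrier} (he : e ∈ ghomSet X X 0) (hee : ∀ x, e (e x) = e x)
    {π : Idx} (hπ : ∃ n c, Step S X (F n) (F (n + 1)) π c)
    (hmax : ∀ n σ c, Step S X (F n) (F (n + 1)) σ c → ¬ π < σ) :
    ∃ (c : ℤ) (p : (S.P π).carrier →ₗ[A.carrier] X.carrier), p ∈ ghomSet (S.P π) X c ∧
      (∀ x, p x = 0 ↔ qm S π x = 0) ∧ ((∀ x, e (p x) = p x) ∨ ∀ x, e (p x) = 0) ∧
      ∃ N' G, N = N' + 1 ∧ RF S X (LinearMap.range p) N' G := by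
  classical
  have hanti : Antitone F := antitone_nat_of_succ_le hF.anti
  obtain ⟨m, ⟨c, hs⟩, hmin⟩ : ∃ m, (∃ c, Step S X (F m) (F (m + 1)) π c) ∧
      ∀ j, j < m → ∀ c, ¬ Step S X (F j) (F (j + 1)) π c :=
    ⟨Nat.find hπ, Nat.find_spec hπ, fun j hj c h => Nat.find_min hπ hj ⟨c, h⟩⟩
  have hmN : m < N := by
    by_contra h
    have h1 : ∀ l, N ≤ l → F l = ⊥ := fun l hl => le_bot_iff.1 (hF.bot ▸ hanti hl)
    exact step_ne S hs ((h1 m (by omega)).trans (h1 (m + 1) (by omega)).symm)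
  obtain ⟨p, hp, hpU, hps, hpk⟩ := hs
  -- all of `hom(P(π), X)` lands in `F m`, where `F m / F (m + 1) ≅ Δ(π)` is the first such step
  have hU : ∀ (d : ℤ) (f : (S.P π).carrier →ₗ[A.carrier] X.carrier), f ∈ ghomSet (S.P π) X d →
      ∀ x, f x ∈ F m := by
    intro d f hf
    refine lands_chain S hF.gr hF.anti hF.step hf (Nat.zero_le m) (fun j _ hj σ c hs hle => ?_)
      (fun x => by rw [hF.top]; trivial)
    rcases hle.eq_or_lt with h | h
    · subst h
      exact hmin j hj c hs
    · exact hmax _ _ _ hs h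
  have hkill : ∀ (d : ℤ) (f : (S.P π).carrier →ₗ[A.carrier] X.carrier), f ∈ ghomSet (S.P π) X d →
      ∀ x, qm S π x = 0 → f x = 0 := by
    intro d f hf
    refine kills_ker S hf fun σ hσ d' g hg => LinearMap.ext fun x => ?_
    have := lands_chain S hF.gr hF.anti hF.step hg (Nat.zero_le N)
      (fun j _ hj τ c hs hle => hmax _ _ _ hs (hσ.trans_le hle))
      (fun x => by rw [hF.top]; trivial) x
    rw [hF.bot] at this
    exact this
  obtain ⟨r, hr1, hr2, -⟩ := step_r S (hF.gr (m + 1)) (hF.anti m) hp hpU hps hpk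
  -- if the image of `e' p` generates `F m` modulo `F (m + 1)`, then `e' p` induces a surjective
  -- endomorphism of `Δ(π)`, which is injective by Noetherianity
  have main : ∀ e' : X.carrier →ₗ[A.carrier] X.carrier, e' ∈ ghomSet X X 0 →
      (F (m + 1) ⊔ LinearMap.range (e' ∘ₗ p)).comap p = ⊤ →
      F m ≤ F (m + 1) ⊔ LinearMap.range (e' ∘ₗ p) ∧
      (∀ x, e' (p x) ∈ F (m + 1) → qm S π x = 0) ∧ ∀ x, qm S π x = 0 → e' (p x) = 0 := by
    intro e' he' htop
    have hpe := ghom_comp hp he'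
    have hin : ∀ y, p y ∈ F (m + 1) ⊔ LinearMap.range (e' ∘ₗ p) := fun y => by
      have : y ∈ (F (m + 1) ⊔ LinearMap.range (e' ∘ₗ p)).comap p := by rw [htop]; trivial
      exact this
    refine ⟨fun w hw => ?_, ?_, hkill _ _ hpe⟩
    · obtain ⟨x, hx⟩ := hps w hw
      rw [← sub_add_cancel w (p x)]
      exact Submodule.add_mem _ (Submodule.mem_sup_left hx) (hin x)
    · obtain ⟨h, hh⟩ := exists_factor (qm S π)
        (r ∘ₗ LinearMap.codRestrict (F m) (e' ∘ₗ p) (hU _ _ hpe)) (qm_surj S π) (by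
          intro x hx
          have : LinearMap.codRestrict (F m) (e' ∘ₗ p) (hU _ _ hpe) x = 0 :=
            Subtype.ext (hkill _ _ hpe x hx)
          rw [LinearMap.comp_apply, this, map_zero])
      have hsurj : Function.Surjective h := by
        intro z
        obtain ⟨y, rfl⟩ := qm_surj S π z
        obtain ⟨v, hv, _, ⟨x, rfl⟩, hvx⟩ := Submodule.mem_sup.1 (hin y)
        refine ⟨qm S π x, ?_⟩
        rw [hh, ← hr1 y, LinearMap.comp_apply, ← sub_eq_zero, ← map_sub, hr2]
        change (e' ∘ₗ p) x - p y ∈ F (m + 1)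
        rw [← hvx, sub_add_cancel_right]
        exact Submodule.neg_mem _ hv
      have := noeth S (S.Δ π)
      have hinj := IsNoetherian.injective_of_surjective_endomorphism h hsurj
      intro x hx
      refine hinj ?_
      rw [map_zero, hh]
      exact (hr2 _).2 hx
  have hfin : ∀ e' : X.carrier →ₗ[A.carrier] X.carrier, e' ∈ ghomSet X X 0 →
      (F (m + 1) ⊔ LinearMap.range (e' ∘ₗ p)).comap p = ⊤ →
      (∀ x, (e' ∘ₗ p) x = 0 ↔ qm S π x = 0) ∧
      ∃ N' G, N = N' + 1 ∧ RF S X (LinearMap.range (e' ∘ₗ p)) N' G := by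
    intro e' he' htop
    obtain ⟨h1, h2, h3⟩ := main e' he' htop
    have hpe := ghom_comp hp he'
    refine ⟨fun x => ⟨fun hx => h2 x ?_, h3 x⟩, ?_⟩
    · change (e' ∘ₗ p) x ∈ _
      rw [hx]
      exact Submodule.zero_mem _
    set D := LinearMap.range (e' ∘ₗ p) with hD
    have hDU : D ≤ F m := by
      rintro _ ⟨x, rfl⟩
      exact hU _ _ hpe x
    have hDV : F (m + 1) ⊓ D = ⊥ := by
      rw [Submodule.eq_bot_iff]
      rintro _ ⟨hx, x, rfl⟩
      exact h3 x (h2 x hx)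
    have hUV : F (m + 1) ⊔ D = F m := le_antisymm (sup_le (hF.anti m) hDU) h1
    obtain ⟨N', rfl⟩ : ∃ N', N = N' + 1 := ⟨N - 1, by omega⟩
    -- delete the step of index `m` and enlarge all later terms by the copy `D` of `Δ(π)`
    let G : ℕ → Submodule A.carrier X.carrier := fun j => if j ≤ m then F j else F (j + 1) ⊔ D
    have hG1 : ∀ j, j ≤ m → G j = F j := fun j hj => if_pos hj
    have hG2 : ∀ j, m ≤ j → G j = F (j + 1) ⊔ D := fun j hj => by
      rcases hj.eq_or_lt with h | h
      · rw [hG1 j h.ge, ← h, hUV]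
      · exact if_neg (by omega)
    refine ⟨N', G, rfl, ?_, ?_, fun j => ?_, fun j => ?_, fun j => ?_⟩
    · rw [hG1 0 (Nat.zero_le m), hF.top]
    · rw [hG2 N' (by omega), hF.bot, bot_sup_eq]
    · rcases lt_or_ge j m with h | h
      · rw [hG1 j h.le, hG1 (j + 1) h]
        exact hF.anti j
      · rw [hG2 j h, hG2 (j + 1) (by omega)]
        exact sup_le_sup_right (hF.anti _) _
    · rcases lt_or_ge j m with h | h
      · rw [hG1 j h.le]
        exact hF.gr j
      · rw [hG2 j h]
        exact gsub_sup (hF.gr _) (gsub_range hpe)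
    · rcases lt_or_ge j m with h | h
      · rw [hG1 j h.le, hG1 (j + 1) h]
        exact hF.step j
      · rw [hG2 j h, hG2 (j + 1) (by omega)]
        rcases hF.step (j + 1) with h4 | ⟨σ, c', hs⟩
        · exact Or.inl (by rw [h4])
        · refine Or.inr ⟨σ, c', step_sup S (hF.anti _) ?_ hs⟩
          have : F (j + 1) ⊓ D ≤ F (m + 1) ⊓ D := inf_le_inf_right _ (hanti (by omega))
          rw [hDV] at this
          exact this.trans bot_le
  have he1 : LinearMap.id - e ∈ ghomSet X X 0 := ghom_sub (ghom_id X) he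
  have hpe := ghom_comp hp he
  have hpe1 := ghom_comp hp he1
  rcases proj_local S π
    (gsub_comap hp (gsub_sup (hF.gr (m + 1)) (gsub_range hpe)))
    (gsub_comap hp (gsub_sup (hF.gr (m + 1)) (gsub_range hpe1))) (by
      refine eq_top_iff.2 fun x _ => ?_
      obtain ⟨y, hy⟩ := hps _ (hU _ _ hpe x)
      refine Submodule.mem_sup.2 ⟨y, ?_, x - y, ?_, by abel⟩
      · rw [Submodule.mem_comap, ← sub_sub_cancel ((e ∘ₗ p) x) (p y)]
        exact Submodule.sub_mem _ (Submodule.mem_sup_right ⟨x, rfl⟩) (Submodule.mem_sup_left hy)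
      · rw [Submodule.mem_comap]
        have e1 : p (x - y) = ((e ∘ₗ p) x - p y) + ((LinearMap.id - e) ∘ₗ p) x := by
          simp only [map_sub, LinearMap.comp_apply, LinearMap.sub_apply, LinearMap.id_apply]
          abel
        rw [e1]
        exact Submodule.add_mem_sup hy ⟨x, rfl⟩) with h | h
  · obtain ⟨h1, h2⟩ := hfin e he h
    exact ⟨_, _, hpe, h1, Or.inl fun x => hee _, h2⟩
  · obtain ⟨h1, h2⟩ := hfin _ he1 h
    refine ⟨_, _, hpe1, h1, Or.inr fun x => ?_, h2⟩
    simp [hee]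

/-- A map `P(π) → Y` killing the kernel of `P(π) → Δ(π)` extends along the copy of `Δ(π)` in `X`
given by `p`, when `Y` is `Good` and `X/Δ(π)` has a standard filtration. -/
theorem extend_peel {X Y : GMod A} (hY : Good S Y) {π : Idx} {c b : ℤ}
    {p : (S.P π).carrier →ₗ[A.carrier] X.carrier} (hp : p ∈ ghomSet (S.P π) X c)
    (hpk : ∀ x, p x = 0 ↔ qm S π x = 0) {N : ℕ} {F : ℕ → Submodule A.carrier X.carrier}
    (hF : RF S X (LinearMap.range p) N F) {g : (S.P π).carrier →ₗ[A.carrier] Y.carrier}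
    (hg : g ∈ ghomSet (S.P π) Y b) (hgk : ∀ x, qm S π x = 0 → g x = 0) :
    ∃ h ∈ ghomSet X Y (b - c), ∀ x, h (p x) = g x := by
  obtain ⟨φ, hφ⟩ := exists_factor p.rangeRestrict g p.surjective_rangeRestrict
    (fun x hx => hgk x ((hpk x).1 (congrArg Subtype.val hx)))
  obtain ⟨ψ, h1, h2⟩ := extend_chain S hY hF (b := b - c) φ (by
    rintro i ⟨y, hy⟩ hyi
    obtain ⟨x, -, hx, rfl⟩ := exists_hom_preimage hp (gsub_top _) hyi
      (by rw [Submodule.map_top]; exact hy)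
    have := hg _ _ hx
    rw [← hφ] at this
    have e : i - c + b = i + (b - c) := by ring
    rw [e] at this
    exact this)
  exact ⟨ψ, h1, fun x => (h2 (p x) ⟨x, rfl⟩).trans (hφ x)⟩

/-! ### Fitting's lemma and splitting off indecomposable tilting modules -/

theorem ghom_comp_zero {M N Q : GMod A} {d : ℤ} {f : M.carrier →ₗ[A.carrier] N.carrier}
    {g : N.carrier →ₗ[A.carrier] Q.carrier} (hf : f ∈ ghomSet M N d) (hg : g ∈ ghomSet N Q 0) :
    g ∘ₗ f ∈ ghomSet M Q d := by
  have := ghom_comp hf hg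
  rwa [add_zero] at this

theorem ghom_zero_comp {M N Q : GMod A} {d : ℤ} {f : M.carrier →ₗ[A.carrier] N.carrier}
    {g : N.carrier →ₗ[A.carrier] Q.carrier} (hf : f ∈ ghomSet M N 0) (hg : g ∈ ghomSet N Q d) :
    g ∘ₗ f ∈ ghomSet M Q d := by
  have := ghom_comp hf hg
  rwa [zero_add] at this

/-- The graded Fitting lemma: a degree-zero endomorphism of an indecomposable module which
fixes a nonzero element is invertible. Graded pieces are finite-dimensional, so the Noetherian
half of Fitting's lemma gives the full decomposition into kernel and range of a power. -/
theorem fitting {T : GMod A} (S : AHW A Idx) (hT : Indec T)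
    {f : T.carrier →ₗ[A.carrier] T.carrier} (hf : f ∈ ghomSet T T 0) {x0 : T.carrier}
    (hx0 : x0 ≠ 0) (hfx : f x0 = x0) : ∃ γ ∈ ghomSet T T 0, ∀ x, γ (f x) = x := by
  have := noeth S T
  obtain ⟨n, hn1, hn⟩ := ((Filter.eventually_ge_atTop 1).and
    (Module.End.eventually_disjoint_ker_pow_range_pow f)).exists
  obtain ⟨n, rfl⟩ : ∃ m, n = m + 1 := ⟨n - 1, by omega⟩
  set g : T.carrier →ₗ[A.carrier] T.carrier := f ^ (n + 1) with hg
  have hgh : g ∈ ghomSet T T 0 := by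
    have : ∀ m, (f ^ m : T.carrier →ₗ[A.carrier] T.carrier) ∈ ghomSet T T 0 := by
      intro m
      induction m with
      | zero => exact ghom_id T
      | succ m ih =>
        rw [pow_succ]
        exact ghom_comp_zero hf ih
    exact this _
  have hgx : g x0 = x0 := by
    have : ∀ m, (f ^ m) x0 = x0 := by
      intro m
      induction m with
      | zero => rfl
      | succ m ih => rw [pow_succ, Module.End.mul_apply, hfx, ih]
    exact this _
  -- in each degree, dimension count upgrades disjointness to a decomposition
  have hdec : ∀ i, ∀ x ∈ T.grading i, ∃ a ∈ T.grading i, ∃ b ∈ T.grading i,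
      g a = 0 ∧ b ∈ LinearMap.range g ∧ a + b = x := by
    intro i x hx
    have := fd S T i
    let gi : T.grading i →ₗ[k] T.grading i := (g.restrictScalars k).restrict fun y hy => by
      have := hgh i y hy
      rwa [add_zero] at this
    have hd : Disjoint (LinearMap.ker gi) (LinearMap.range gi) := by
      rw [Submodule.disjoint_def]
      rintro _ h1 ⟨y, rfl⟩
      refine Subtype.ext ?_
      exact Submodule.disjoint_def.1 hn _ (congrArg Subtype.val h1) ⟨y.1, rfl⟩
    have htop := Submodule.eq_top_of_disjoint _ _
      (by rw [add_comm]; exact (LinearMap.finrank_range_add_finrank_ker gi).ge) hd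
    have hxt : (⟨x, hx⟩ : T.grading i) ∈ LinearMap.ker gi ⊔ LinearMap.range gi := by
      rw [htop]; trivial
    obtain ⟨a, ha, _, ⟨y, rfl⟩, hab⟩ := Submodule.mem_sup.1 hxt
    exact ⟨a.1, a.2, (gi y).1, (gi y).2, congrArg Subtype.val ha, ⟨y.1, rfl⟩,
      congrArg Subtype.val hab⟩
  have hcompl : IsCompl (LinearMap.range g) (LinearMap.ker g) := by
    refine ⟨hn.symm, codisjoint_iff.2 (eq_top_iff.2 fun x _ => ?_)⟩
    refine mem_of_cmp T ((LinearMap.range g ⊔ LinearMap.ker g).restrictScalars k) fun i => ?_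
    obtain ⟨a, -, b, -, ha, hb, e⟩ := hdec i _ (cmp_mem T i x)
    rw [← e, add_comm]
    exact Submodule.add_mem_sup hb ha
  let e : T.carrier →ₗ[A.carrier] T.carrier :=
    (LinearMap.range g).subtype ∘ₗ Submodule.projectionOnto _ _ hcompl
  have her : ∀ b ∈ LinearMap.range g, e b = b := fun b hb =>
    congrArg Subtype.val (Submodule.projectionOnto_apply_left hcompl ⟨b, hb⟩)
  have hek : ∀ a, g a = 0 → e a = 0 := fun a ha =>
    congrArg Subtype.val ((Submodule.projectionOnto_apply_eq_zero_iff hcompl).2 ha)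
  have hem : ∀ x, e x ∈ LinearMap.range g := fun x => (Submodule.projectionOnto _ _ hcompl x).2
  let em : T ⟶ T := ⟨e, fun i x hx => by
    obtain ⟨a, -, b, hb, ha, hbr, rfl⟩ := hdec i x hx
    rw [map_add, hek a ha, her b hbr, zero_add]
    exact hb⟩
  have hid : e = LinearMap.id := by
    rcases hT.2 em (Subtype.ext (LinearMap.ext fun x => her _ (hem x))) with h | h
    · exfalso
      apply hx0
      rw [← her x0 ⟨x0, hgx⟩]
      exact LinearMap.congr_fun h x0
    · exact h
  have hinj : Function.Injective f := by
    refine (injective_iff_map_eq_zero f).2 fun x hx => ?_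
    have h1 : g x = 0 := by rw [hg, pow_succ, Module.End.mul_apply, hx, map_zero]
    rw [← hek x h1, hid, LinearMap.id_apply]
  have hsurj : Function.Surjective f := by
    intro x
    have h1 := hem x
    rw [hid, LinearMap.id_apply] at h1
    obtain ⟨y, rfl⟩ := h1
    exact ⟨(f ^ n) y, by rw [hg, pow_succ', Module.End.mul_apply]⟩
  let E := LinearEquiv.ofBijective f ⟨hinj, hsurj⟩
  refine ⟨E.symm.toLinearMap, fun i y hy => ?_, fun x => E.symm_apply_apply x⟩
  obtain ⟨x, rfl⟩ := hsurj y
  change E.symm (E x) ∈ _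
  rw [E.symm_apply_apply]
  obtain ⟨z, -, hz, hzx⟩ := exists_hom_preimage hf (gsub_top _) hy
    (by rw [Submodule.map_top]; exact ⟨x, rfl⟩)
  rw [← hinj hzx]
  simpa using hz

/-- `M` is a finite direct sum of shifts of the modules `T π`, expressed by homogeneous
inclusions `α i` and projections `β i`. -/
def Dec (T : Idx → GMod A) (M : GMod A) : Prop :=
  ∃ (ι : Type) (_ : Fintype ι) (lab : ι → Idx) (d : ι → ℤ)
    (α : ∀ i, (T (lab i)).carrier →ₗ[A.carrier] M.carrier)
    (β : ∀ i, M.carrier →ₗ[A.carrier] (T (lab i)).carrier),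
    (∀ i, α i ∈ ghomSet (T (lab i)) M (d i)) ∧ (∀ i, β i ∈ ghomSet M (T (lab i)) (-d i)) ∧
    (∀ i x, β i (α i x) = x) ∧ (∀ i j, i ≠ j → ∀ x, β i (α j x) = 0) ∧
    ∀ x, ∑ i, α i (β i x) = x

/-- A complement of a split submodule. -/
theorem exists_compl (S : AHW A Idx) {M Y : GMod A} {d d' : ℤ}
    {α : Y.carrier →ₗ[A.carrier] M.carrier} {β : M.carrier →ₗ[A.carrier] Y.carrier}
    (hα : α ∈ ghomSet Y M d) (hβ : β ∈ ghomSet M Y d') (hd : d' = -d)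
    (h : ∀ x, β (α x) = x) :
    ∃ (M' : GMod A) (i : M'.carrier →ₗ[A.carrier] M.carrier)
      (q : M.carrier →ₗ[A.carrier] M'.carrier), i ∈ ghomSet M' M 0 ∧ q ∈ ghomSet M M' 0 ∧
      (∀ x, q (i x) = x) ∧ (∀ x, β (i x) = 0) ∧ (∀ x, q (α x) = 0) ∧
      ∀ x, i (q x) + α (β x) = x := by
  subst hd
  let q0 : M.carrier →ₗ[A.carrier] M.carrier := LinearMap.id - α ∘ₗ β
  have hq0 : ∀ x, q0 x = x - α (β x) := fun x => rfl
  have hk : ∀ x, q0 x ∈ LinearMap.ker β := fun x => by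
    rw [LinearMap.mem_ker, hq0, map_sub, h, sub_self]
  have hq0g : q0 ∈ ghomSet M M 0 :=
    ghom_sub (ghom_id M) (by simpa using ghom_comp hβ hα)
  refine ⟨sb S M (LinearMap.ker β) (gsub_ker hβ), (LinearMap.ker β).subtype,
    LinearMap.codRestrict _ q0 hk, fun i x hx => ?_, fun i x hx => hq0g i x hx, ?_,
    fun x => x.2, fun x => Subtype.ext ?_, fun x => ?_⟩
  · rw [add_zero]; exact hx
  · rintro ⟨x, hx⟩
    refine Subtype.ext ?_
    change q0 x = x
    rw [hq0, LinearMap.mem_ker.1 hx, map_zero, sub_zero]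
  · change q0 (α x) = 0
    rw [hq0, h, sub_self]
  · change q0 x + α (β x) = x
    rw [hq0, sub_add_cancel]

/-- Adjoining a summand `q^d T(π)` to a decomposition of a complement. -/
theorem dec_add (T : Idx → GMod A) {M M' : GMod A} {π : Idx} {d : ℤ}
    {α : (T π).carrier →ₗ[A.carrier] M.carrier} {β : M.carrier →ₗ[A.carrier] (T π).carrier}
    (hα : α ∈ ghomSet (T π) M d) (hβ : β ∈ ghomSet M (T π) (-d)) (h : ∀ x, β (α x) = x)
    {i : M'.carrier →ₗ[A.carrier] M.carrier} {q : M.carrier →ₗ[A.carrier] M'.carrier}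
    (hi : i ∈ ghomSet M' M 0) (hq : q ∈ ghomSet M M' 0) (hqi : ∀ x, q (i x) = x)
    (hβi : ∀ x, β (i x) = 0) (hqα : ∀ x, q (α x) = 0) (hs : ∀ x, i (q x) + α (β x) = x)
    (hM' : Dec T M') : Dec T M := by
  obtain ⟨ι, _, lab, e, a, b, ha, hb, h1, h2, h3⟩ := hM'
  let lab' : Option ι → Idx := fun o => o.elim π lab
  let e' : Option ι → ℤ := fun o => o.elim d e
  let a' : ∀ o, (T (lab' o)).carrier →ₗ[A.carrier] M.carrier := fun o => match o with
    | none => α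
    | some j => i ∘ₗ a j
  let b' : ∀ o, M.carrier →ₗ[A.carrier] (T (lab' o)).carrier := fun o => match o with
    | none => β
    | some j => b j ∘ₗ q
  refine ⟨Option ι, inferInstance, lab', e', a', b', ?_, ?_, ?_, ?_, ?_⟩
  · rintro (_ | j)
    · exact hα
    · exact ghom_comp_zero (ha j) hi
  · rintro (_ | j)
    · exact hβ
    · exact ghom_zero_comp hq (hb j)
  · rintro (_ | j) x
    · exact h x
    · exact (congrArg (b j) (hqi _)).trans (h1 j x)
  · rintro (_ | j) (_ | l) hne x
    · exact absurd rfl hne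
    · exact hβi _
    · exact (congrArg (b j) (hqα x)).trans (map_zero _)
    · exact (congrArg (b j) (hqi _)).trans (h2 j l (fun h => hne (by rw [h])) x)
  · intro x
    rw [Fintype.sum_option]
    have h4 : ∑ j, i (a j (b j (q x))) = i (q x) := by rw [← map_sum, h3]
    exact (congrArg (α (β x) + ·) h4).trans ((add_comm _ _).trans (hs x))

/-- The data on the modules `T π` used for splitting them off: an embedding of `Δ(π)` into
`T π` such that the quotient has a finite standard filtration. -/
theorem tilt_data {T : GMod A} {π : Idx} (hT : MultCond S T π) :
    ∃ (c : ℤ) (p : (S.P π).carrier →ₗ[A.carrier] T.carrier), p ∈ ghomSet (S.P π) T c ∧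
      (∀ x, p x = 0 ↔ qm S π x = 0) ∧ ∃ N F, RF S T (LinearMap.range p) N F := by
  obtain ⟨Φ, hΦ, ⟨N, hN⟩, h1, h0⟩ := hT
  have hanti : Antitone Φ.F := antitone_nat_of_succ_le Φ.anti
  have hsq : ∀ n σ d, SQIso T (Φ.F n) (Φ.F (n + 1)) (GMod.shift d (S.Δ σ)) → n < N := by
    intro n σ d h
    by_contra hn
    have hb : ∀ l, N ≤ l → Φ.F l = ⊥ := fun l hl => le_bot_iff.1 (hN ▸ hanti hl)
    exact step_ne S (step_of_sq S (Φ.graded n) h)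
      ((hb n (by omega)).trans (hb (n + 1) (by omega)).symm)
  have hfin : ∀ σ, {n : ℕ | ∃ d : ℤ,
      SQIso T (Φ.F n) (Φ.F (n + 1)) (GMod.shift d (S.Δ σ))}.Finite := fun σ =>
    (Set.finite_lt_nat N).subset fun n ⟨d, h⟩ => hsq n σ d h
  have hle : ∀ n σ c, Step S T (Φ.F n) (Φ.F (n + 1)) σ c → σ ≤ π := by
    intro n σ c hs
    rcases hΦ n with e | ⟨_, ⟨τ, rfl⟩, d, hd⟩
    · exact absurd (subsingleton_sq (Φ.anti n) e) (step_ne S hs)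
    · have hτ : τ ≤ π := by
        by_contra hτ
        have := (Set.ncard_eq_zero (hfin τ)).1 (h0 τ hτ)
        have hn : n ∈ (∅ : Set ℕ) := by rw [← this]; exact ⟨d, hd⟩
        exact hn
      refine le_trans ?_ hτ
      -- otherwise the map from `P(σ)` would land in the smaller submodule
      by_contra hστ
      obtain ⟨p, hp, h1, -, h3⟩ := hs
      obtain ⟨x, hx⟩ := std_nontrivial S σ
      exact hx ((h3 x).1 (lands_next S (Φ.graded _) (Φ.anti n)
        (step_of_sq S (Φ.graded n) hd) hστ hp h1 x))
  obtain ⟨N', hF⟩ := rf_of_filt S Φ hΦ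
  obtain ⟨n, d, hn⟩ := (Set.ncard_pos (hfin π)).1 (by
    change 0 < dMult S Φ π
    rw [h1]; exact one_pos)
  obtain ⟨c, p, hp, hpk, -, N'', G, -, hG⟩ := peel S hF (ghom_id T) (fun x => rfl)
    ⟨n, d, step_of_sq S (Φ.graded n) hn⟩ (fun m σ c hs => (hle m σ c hs).not_gt)
  exact ⟨c, p, hp, hpk, N'', G, hG⟩

/-- A `Good` direct summand `M` of a module `X` with a finite standard filtration is a direct sum
of modules `q^n T(π)`. Induction on the length of the filtration of `X`. -/
theorem dec_of_retract (T : Idx → GMod A) (hI : ∀ π, Indec (T π)) (hG : ∀ π, Good S (T π))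
    (hm : ∀ π, MultCond S (T π) π) (N : ℕ) : ∀ (X M : GMod A)
    (F : ℕ → Submodule A.carrier X.carrier) (_ : RF S X ⊥ N F)
    (j : M.carrier →ₗ[A.carrier] X.carrier) (p : X.carrier →ₗ[A.carrier] M.carrier)
    (_ : j ∈ ghomSet M X 0) (_ : p ∈ ghomSet X M 0) (_ : ∀ x, p (j x) = x) (_ : Good S M),
    Dec T M := by
  induction N using Nat.strong_induction_on with
  | _ N ih =>
  intro X M F hF j p hj hp hpj hM
  by_cases hlab : ∃ π n c, Step S X (F n) (F (n + 1)) π c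
  swap
  · have hcon : ∀ n, F n = ⊤ := by
      intro n
      induction n with
      | zero => exact hF.top
      | succ n ih =>
        rcases hF.step n with e | ⟨σ, c, hs⟩
        · rw [← e, ih]
        · exact absurd ⟨σ, n, c, hs⟩ hlab
    have h0 : ∀ x : M.carrier, x = 0 := fun x => by
      have : j x ∈ F N := by rw [hcon]; trivial
      rw [hF.bot, Submodule.mem_bot] at this
      rw [← hpj x, this, map_zero]
    exact ⟨Empty, inferInstance, fun i => i.elim, fun i => i.elim, fun i => i.elim,
      fun i => i.elim, fun i => i.elim, fun i => i.elim, fun i => i.elim, fun i => i.elim,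
      fun x => (h0 _).trans (h0 _).symm⟩
  let I : Set Idx := {π | ∃ n c, Step S X (F n) (F (n + 1)) π c}
  obtain ⟨π, hπ⟩ := I.toFinite.exists_maximal hlab
  have hmax : ∀ n σ c, Step S X (F n) (F (n + 1)) σ c → ¬ π < σ := fun n σ c hs hlt =>
    absurd (hπ.2 (show σ ∈ I from ⟨n, c, hs⟩) hlt.le) (not_le_of_gt hlt)
  obtain ⟨c, p', hp', hpk, hcase, N', G, rfl, hGF⟩ := peel S hF
    (e := j ∘ₗ p) (ghom_comp_zero hp hj) (fun x => by simp [hpj]) hπ.1 hmax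
  have hD := gsub_range hp'
  obtain ⟨G', hG'⟩ := rf_quot S hD hGF
  let mk : X.carrier →ₗ[A.carrier] (qt X _ hD).carrier := Submodule.mkQ _
  have hmk : mk ∈ ghomSet X (qt X _ hD) 0 := mkQ_ghom X _ hD
  -- a direct summand of `X` whose projection kills the copy of `Δ(π)` is a direct summand of
  -- the quotient, which has a shorter filtration
  have hred : ∀ (M' : GMod A) (j' : M'.carrier →ₗ[A.carrier] X.carrier)
      (q : X.carrier →ₗ[A.carrier] M'.carrier), j' ∈ ghomSet M' X 0 → q ∈ ghomSet X M' 0 →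
      (∀ x, q (j' x) = x) → (∀ x, q (p' x) = 0) → Good S M' → Dec T M' := by
    intro M' j' q hj' hq hqj hqp hM'
    obtain ⟨q', hq', hqq⟩ := exists_desc X M' _ hD hq (by
      rintro _ ⟨x, rfl⟩
      exact hqp x)
    exact ih N' (Nat.lt_succ_self _) (qt X _ hD) M' G' hG' (mk ∘ₗ j') q'
      (ghom_comp_zero hj' hmk) hq' (fun x => (hqq _).trans (hqj x)) hM'
  rcases hcase with h1 | h1
  swap
  -- the idempotent `j p` kills the copy of `Δ(π)`: pass to the quotient
  · refine hred M j p hj hp hpj (fun x => ?_) hM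
    have := h1 x
    rw [LinearMap.comp_apply] at this
    rw [← hpj (p (p' x)), this, map_zero]
  -- the copy of `Δ(π)` lies in `M`: extend `Δ(π) → M` to `T π → M` and `Δ(π) → T π` to `X → T π`
  · obtain ⟨cT, pT, hpT, hpTk, NT, GT, hGT⟩ := tilt_data S (hm π)
    obtain ⟨α, hα, hα2⟩ := extend_peel S hM hpT hpTk hGT (g := p ∘ₗ p')
      (ghom_comp_zero hp' hp) (fun x hx => by
        rw [LinearMap.comp_apply, (hpk x).2 hx, map_zero])
    obtain ⟨β, hβ, hβ2⟩ := extend_peel S (hG π) hp' hpk hGF hpT (fun x hx => (hpTk x).2 hx)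
    obtain ⟨x, hx⟩ := std_nontrivial S π
    have hβj := ghom_comp hj hβ
    have hfix : ((β ∘ₗ j) ∘ₗ α) (pT x) = pT x := by
      rw [LinearMap.comp_apply, hα2]
      change β ((j ∘ₗ p) (p' x)) = _
      rw [h1, hβ2]
    obtain ⟨γ, hγ, hγ2⟩ := fitting S (hI π) (f := (β ∘ₗ j) ∘ₗ α)
      (by
        have := ghom_comp hα hβj
        rwa [show c - cT + (0 + (cT - c)) = 0 by ring] at this)
      (fun h => hx ((hpTk x).1 h)) hfix
    have hβ1 := ghom_comp hβj hγ
    rw [show 0 + (cT - c) + 0 = -(c - cT) by ring] at hβ1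
    obtain ⟨M', i, q, hi, hq, hqi, hβi, hqα, hs⟩ := exists_compl S hα hβ1 rfl hγ2
    refine dec_add T hα hβ1 hγ2 hi hq hqi hβi hqα hs ?_
    refine hred M' (j ∘ₗ i) (q ∘ₗ p) (ghom_comp_zero hi hj)
      (ghom_comp_zero hp hq) (fun y => ?_) (fun y => ?_) (good_retract S hM hi hq hqi)
    · rw [LinearMap.comp_apply, LinearMap.comp_apply, hpj, hqi]
    · rw [← hqα (pT y), hα2]
      rfl

/-- The range of a split homogeneous inclusion, as a subquotient. -/
theorem sqiso_range {M Y : GMod A} {d : ℤ} {α : Y.carrier →ₗ[A.carrier] M.carrier}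
    (hα : α ∈ ghomSet Y M d) (hinj : Function.Injective α) :
    SQIso M (LinearMap.range α) ⊥ (GMod.shift d Y) := by
  let E := LinearEquiv.ofInjective α hinj
  have hb : (⊥ : Submodule A.carrier M.carrier).comap (LinearMap.range α).subtype = ⊥ := by
    rw [Submodule.comap_bot, Submodule.ker_subtype]
  let e : sqMod M (LinearMap.range α) ⊥ ≃ₗ[A.carrier] Y.carrier :=
    Submodule.quotEquivOfEqBot _ hb ≪≫ₗ E.symm
  have he : ∀ y, e (Submodule.Quotient.mk (E y)) = y := fun y => by
    change E.symm (Submodule.quotEquivOfEqBot _ hb (Submodule.Quotient.mk (E y))) = y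
    rw [Submodule.quotEquivOfEqBot_apply_mk, E.symm_apply_apply]
  have hEv : ∀ y, (E y).1 = α y := fun y => rfl
  refine ⟨e, fun i => le_antisymm ?_ fun y hy => ?_⟩
  · rintro _ ⟨_, ⟨⟨_, y, rfl⟩, hy, rfl⟩, rfl⟩
    obtain ⟨z, -, hz, hzy⟩ := exists_hom_preimage hα (gsub_top _) hy
      (by rw [Submodule.map_top]; exact ⟨y, rfl⟩)
    have hzy := hinj hzy
    subst hzy
    have h1 := he z
    change e (Submodule.Quotient.mk (E z)) ∈ Y.grading (i - d)
    rw [h1]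
    exact hz
  · refine ⟨Submodule.Quotient.mk (E y), ⟨E y, ?_, rfl⟩, he y⟩
    have h1 : α y ∈ M.grading (i - d + d) := hα _ _ hy
    rw [sub_add_cancel] at h1
    exact h1

end GT

/-- For an affine quasi-hereditary algebra with property `(♠)`,
every tilting module is a finite direct sum of shifts `qⁿ T(π)` of the
indecomposable tilting modules `T(π)`, expressed as an internal decomposition
into graded submodules each isomorphic to some `qⁿ T(π)`. -/
theorem every_tilting_module_is_a_direct_sum_of_indecomposables
    {k : Type} [Field k] (A : GAlg k) (hspade : A.Spade)
    (Idx : Type) [Fintype Idx] [PartialOrder Idx] (S : AHW A Idx)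
    (T : Idx → GMod A)
    (hT : ∀ π, IsTilting S (T π) ∧ Indec (T π) ∧ MultCond S (T π) π)
    (M : GMod A) (hM : IsTilting S M) :
    ∃ (n : ℕ) (p : Fin n → Idx) (d : Fin n → ℤ)
      (W : Fin n → Submodule A.carrier M.carrier),
      (∀ i, M.IsGSub (W i)) ∧ iSupIndep W ∧ (⨆ i, W i) = ⊤ ∧
      ∀ i, SQIso M (W i) (⊥ : Submodule A.carrier M.carrier)
        (GMod.shift (d i) (T (p i))) := by
  obtain ⟨⟨Φ, hΦ⟩, hpc⟩ := hM
  obtain ⟨N, hF⟩ := GT.rf_of_filt S Φ hΦ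
  obtain ⟨ι, _, lab, d, α, β, hα, -, h1, h2, h3⟩ := GT.dec_of_retract S T (fun π => (hT π).2.1)
    (fun π => GT.good_of_pcfilt S (hT π).1.2) (fun π => (hT π).2.2) N M M Φ.F hF LinearMap.id
    LinearMap.id (GT.ghom_id M) (GT.ghom_id M) (fun x => rfl) (GT.good_of_pcfilt S hpc)
  let f : Fin (Fintype.card ι) ≃ ι := (Fintype.equivFin ι).symm
  refine ⟨Fintype.card ι, lab ∘ f, d ∘ f, fun i => LinearMap.range (α (f i)),
    fun i => GT.gsub_range (hα _), fun i => ?_, eq_top_iff.2 fun x _ => ?_,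
    fun i => GT.sqiso_range (hα _) (Function.LeftInverse.injective (h1 (f i)))⟩
  · rw [Submodule.disjoint_def]
    rintro _ ⟨x, rfl⟩ hx
    have hle : (⨆ j, ⨆ (_ : j ≠ i), LinearMap.range (α (f j))) ≤ LinearMap.ker (β (f i)) := by
      refine iSup₂_le fun j hj => ?_
      rintro _ ⟨y, rfl⟩
      exact h2 _ _ (fun h => hj (f.injective h).symm) y
    have h4 := hle hx
    rw [LinearMap.mem_ker, h1] at h4
    rw [h4, map_zero]
  · rw [← h3 x]
    refine Submodule.sum_mem _ fun i _ => ?_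
    obtain ⟨l, rfl⟩ := f.surjective i
    exact Submodule.mem_iSup_of_mem l ⟨_, rfl⟩
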